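/- Fix a positive integer k. Then, as h → 0 with ε = ε(h) → 0 and ε(h)/√h → ∞, one has E( J_h^{2k}·1_{|σW_h + J_h| ≤ ε} ) = ((C₊+C₋)/(2k−Y))·h·ε^{2k−Y} + O(h²·ε^{2k−Y−2}) + O(h·ε^{2k−Y/2}). -/

import Mathlib

open MeasureTheory ProbabilityTheory Filter Asymptotics Set
open scoped Topology NNReal ENNReal Real

noncomputable section

/-- The Lévy density `s(x) = (C₊·1_{x>0} + C₋·1_{x<0})·q(x)·|x|^{−1−Y}`. -/
def levyDensity (Y Cp Cm : ℝ) (q : ℝ → ℝ) (x : ℝ) : ℝ :=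
  (if 0 < x then Cp else if x < 0 then Cm else 0) * q x * |x| ^ (-1 - Y)

/-- The Lévy measure `ν(dx) = s(x) dx`. -/
def levyMeasure (Y Cp Cm : ℝ) (q : ℝ → ℝ) : Measure ℝ :=
  volume.withDensity fun x => ENNReal.ofReal (levyDensity Y Cp Cm q x)

/-- The Lévy exponent `ψ_J(u) = ibu + ∫ (e^{iux} − 1 − iux·1_{|x|≤1}) ν(dx)`. -/
def psiJ (b Y Cp Cm : ℝ) (q : ℝ → ℝ) (u : ℝ) : ℂ :=
  Complex.I * b * u +
    ∫ x : ℝ,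
      (Complex.exp (Complex.I * u * x) - 1 - (if |x| ≤ 1 then Complex.I * u * x else 0))
      ∂(levyMeasure Y Cp Cm q)

/-- The scale parameter `ς = ((C₊+C₋)Γ(−Y)|cos(πY/2)|)^{1/Y}`. -/
def varsigma (Y Cp Cm : ℝ) : ℝ :=
  ((Cp + Cm) * Real.Gamma (-Y) * |Real.cos (π * Y / 2)|) ^ (1 / Y)

/-- The stable part of the Lévy exponent:
`ς^Y |u|^Y (1 − iβ·sgn(u)·tan(πY/2))` with `β = (C₊−C₋)/(C₊+C₋)`. -/
def stablePart (Y Cp Cm : ℝ) (u : ℝ) : ℂ :=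
  (varsigma Y Cp Cm ^ Y * |u| ^ Y : ℝ) *
    (1 - Complex.I * ((Cp - Cm) / (Cp + Cm)) * Real.sign u * Real.tan (π * Y / 2))

/-- Characteristic function of `X̃_h`, the time-`h` marginal of a Brownian motion with
variance `σ²` plus an independent strictly `Y`-stable process. -/
def tildeCF (σ Y Cp Cm : ℝ) (h u : ℝ) : ℂ :=
  Complex.exp (-(σ ^ 2 * u ^ 2 * h / 2) - h * stablePart Y Cp Cm u)


/-- Lévy continuity: existence of a limit law. -/
lemma exists_limit_law (μ : ℕ → Measure ℝ) [∀ i, IsProbabilityMeasure (μ i)] (f : ℝ → ℂ)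
    (hf : ContinuousAt f 0) (h : ∀ t, Tendsto (fun n => charFun (μ n) t) atTop (𝓝 (f t))) :
    ∃ m : Measure ℝ, IsProbabilityMeasure m ∧ ∀ t, charFun m t = f t := by
  have ht := isTightMeasureSet_of_tendsto_charFun hf h
  let ν : ℕ → ProbabilityMeasure ℝ := fun n => ⟨μ n, inferInstance⟩
  have hc : IsCompact (closure (Set.range ν)) := by
    apply isCompact_closure_of_isTightMeasureSet
    convert ht using 1
    ext m
    constructor
    · rintro ⟨_, ⟨n, rfl⟩, rfl⟩
      exact ⟨n, rfl⟩
    · rintro ⟨n, rfl⟩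
      exact ⟨ν n, ⟨n, rfl⟩, rfl⟩
  obtain ⟨m, -, φ, hφ, hm⟩ := hc.tendsto_subseq (x := ν) (fun n => subset_closure ⟨n, rfl⟩)
  refine ⟨m, inferInstance, fun t => ?_⟩
  have h2 := (ProbabilityMeasure.tendsto_iff_tendsto_charFun.1 hm) t
  exact tendsto_nhds_unique h2 ((h t).comp hφ.tendsto_atTop)

/-- convolution powers -/
def convPow (A : Measure ℝ) : ℕ → Measure ℝ
  | 0 => Measure.dirac 0
  | n + 1 => A.conv (convPow A n)

instance convPow_finite (A : Measure ℝ) [IsFiniteMeasure A] (n : ℕ) :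
    IsFiniteMeasure (convPow A n) := by
  induction n with
  | zero => unfold convPow; infer_instance
  | succ n ih => unfold convPow; infer_instance

lemma charFun_convPow (A : Measure ℝ) [IsFiniteMeasure A] (n : ℕ) (t : ℝ) :
    charFun (convPow A n) t = charFun A t ^ n := by
  induction n with
  | zero => simp [convPow]
  | succ n ih => rw [convPow, charFun_conv, ih, pow_succ']

lemma real_convPow (A : Measure ℝ) [IsFiniteMeasure A] (n : ℕ) :
    (convPow A n).real univ = A.real univ ^ n := by
  have := charFun_convPow A n 0
  simp only [charFun_zero] at this
  exact_mod_cast this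

/-- unnormalised compound Poisson -/
def expm (A : Measure ℝ) : Measure ℝ :=
  Measure.sum fun n : ℕ => ENNReal.ofReal ((n.factorial : ℝ)⁻¹) • convPow A n

lemma expm_univ (A : Measure ℝ) [IsFiniteMeasure A] :
    expm A univ = ENNReal.ofReal (Real.exp (A.real univ)) := by
  have hs := Real.summable_pow_div_factorial (A.real univ)
  rw [expm, Measure.sum_apply _ MeasurableSet.univ, Real.exp_eq_exp_ℝ,
    NormedSpace.exp_eq_tsum_div, ENNReal.ofReal_tsum_of_nonneg (fun n => by positivity) hs]
  congr 1
  ext n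
  rw [Measure.smul_apply, smul_eq_mul, ← ENNReal.ofReal_toReal (measure_ne_top (convPow A n) univ),
    ← ENNReal.ofReal_mul (by positivity)]
  congr 1
  have := real_convPow A n
  rw [measureReal_def] at this
  rw [this]; ring

instance expm_finite (A : Measure ℝ) [IsFiniteMeasure A] : IsFiniteMeasure (expm A) :=
  ⟨by rw [expm_univ]; exact ENNReal.ofReal_lt_top⟩

lemma hasSum_expm {E : Type*} [NormedAddCommGroup E] [NormedSpace ℝ E]
    (A : Measure ℝ) [IsFiniteMeasure A] (f : ℝ → E)
    (hf : Integrable f (expm A)) :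
    HasSum (fun n : ℕ => ((n.factorial : ℝ)⁻¹) • ∫ x, f x ∂(convPow A n)) (∫ x, f x ∂(expm A)) := by
  have := hasSum_integral_measure (f := f) hf
  have e : (fun n : ℕ => ((n.factorial : ℝ)⁻¹) • ∫ x, f x ∂(convPow A n)) =
      fun n : ℕ => ∫ x, f x ∂(ENNReal.ofReal ((n.factorial : ℝ)⁻¹) • convPow A n) := by
    ext n
    rw [integral_smul_measure, ENNReal.toReal_ofReal (by positivity)]
  rw [e]
  exact this

lemma charFun_expm (A : Measure ℝ) [IsFiniteMeasure A] (t : ℝ) :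
    charFun (expm A) t = Complex.exp (charFun A t) := by
  have h1 : Integrable (fun x : ℝ => Complex.exp (t * x * Complex.I)) (expm A) := by
    refine (integrable_const (1 : ℝ)).mono (by fun_prop) (ae_of_all _ fun x => ?_)
    rw [← Complex.ofReal_mul, Complex.norm_exp_ofReal_mul_I]; simp
  have h2 := hasSum_expm A _ h1
  simp_rw [← charFun_apply_real, charFun_convPow] at h2
  have h3 := NormedSpace.expSeries_div_hasSum_exp (charFun A t)
  rw [← Complex.exp_eq_exp_ℂ] at h3
  refine h2.unique ?_
  have e : (fun n : ℕ => ((n.factorial : ℝ)⁻¹) • charFun A t ^ n) =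
      fun n : ℕ => charFun A t ^ n / (n.factorial : ℂ) := by
    ext n
    rw [Complex.real_smul]; push_cast; ring
  rw [e]
  exact h3

/-- The compound Poisson law. -/
lemma exists_cpois (A : Measure ℝ) [IsFiniteMeasure A] :
    ∃ m : Measure ℝ, IsProbabilityMeasure m ∧
      (∀ t, charFun m t = Complex.exp (charFun A t - A.real univ)) ∧
      ∀ (f : ℝ → ℝ) (M : ℝ), Measurable f → (∀ x, |f x| ≤ M) →
        |∫ x, f x ∂m - (1 - A.real univ) * f 0 - ∫ x, f x ∂A| ≤ 3 * M * A.real univ ^ 2 := by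
  set l := A.real univ with hl
  have hl0 : 0 ≤ l := measureReal_nonneg
  refine ⟨ENNReal.ofReal (Real.exp (-l)) • expm A, ⟨?_⟩, fun t => ?_, fun f M hf hM => ?_⟩
  · rw [Measure.smul_apply, expm_univ, smul_eq_mul, ← ENNReal.ofReal_mul (by positivity),
      ← Real.exp_add]; simp [hl]
  · rw [charFun_apply_real, integral_smul_measure, ← charFun_apply_real, charFun_expm,
      ENNReal.toReal_ofReal (by positivity), Complex.real_smul, sub_eq_neg_add, Complex.exp_add]
    push_cast; rfl
  · have hM0 : 0 ≤ M := (abs_nonneg _).trans (hM 0)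
    have hIntf : ∀ m : Measure ℝ, IsFiniteMeasure m → Integrable f m := fun m _ =>
      (integrable_const M).mono' hf.aestronglyMeasurable (ae_of_all _ fun x => by simpa using hM x)
    have hs := hasSum_expm A f (hIntf _ inferInstance)
    have hb : ∀ n, |∫ x, f x ∂(convPow A n)| ≤ M * l ^ n := fun n => by
      have := norm_integral_le_of_norm_le_const (μ := convPow A n) (f := f) (C := M)
        (ae_of_all _ fun x => by simpa using hM x)
      rwa [real_convPow, ← hl, Real.norm_eq_abs] at this
    have h0 : ∫ x, f x ∂(convPow A 0) = f 0 := by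
      rw [convPow, integral_dirac' _ _ hf.stronglyMeasurable]
    have h1 : ∫ x, f x ∂(convPow A 1) = ∫ x, f x ∂A := by
      rw [convPow, convPow, Measure.conv_dirac_zero]
    have hs2 := (hasSum_nat_add_iff' 2).2 hs
    have he : HasSum (fun n : ℕ => l ^ n / n.factorial) (Real.exp l) := by
      have := NormedSpace.expSeries_div_hasSum_exp l
      rwa [← Real.exp_eq_exp_ℝ] at this
    have he2 := ((hasSum_nat_add_iff' 2).2 he).mul_left M
    have hR : |∫ x, f x ∂(expm A) - f 0 - ∫ x, f x ∂A| ≤ M * (Real.exp l - 1 - l) := by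
      have e1 : ∫ x, f x ∂(expm A) - f 0 - ∫ x, f x ∂A = ∑' n : ℕ,
          (((n + 2).factorial : ℝ)⁻¹) • ∫ x, f x ∂(convPow A (n + 2)) := by
        rw [hs2.tsum_eq]; simp [Finset.sum_range_succ, h0, h1]; ring
      have e2 : M * (Real.exp l - 1 - l) =
          ∑' n : ℕ, M * (l ^ (n + 2) / (n + 2).factorial) := by
        rw [he2.tsum_eq]; simp only [Finset.sum_range_succ, Finset.sum_range_zero]; norm_num; ring_nf; simp
      rw [e1, e2, ← Real.norm_eq_abs]
      refine tsum_of_norm_bounded he2.summable.hasSum fun n => ?_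
      rw [norm_smul, Real.norm_eq_abs, Real.norm_eq_abs, abs_of_nonneg (by positivity)]
      calc _ ≤ (((n + 2).factorial : ℝ)⁻¹) * (M * l ^ (n + 2)) := by gcongr; exact hb _
        _ = _ := by ring
    rw [integral_smul_measure, ENNReal.toReal_ofReal (by positivity), smul_eq_mul]
    have hf0 : |f 0| ≤ M := hM 0
    have hfA : |∫ x, f x ∂A| ≤ M * l := by have := hb 1; rwa [h1, pow_one] at this
    set X := ∫ x, f x ∂(expm A)
    set Z := ∫ x, f x ∂A
    have hE1 : Real.exp (-l) * Real.exp l = 1 := by rw [← Real.exp_add]; simp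
    have hE0 : 0 < Real.exp (-l) := Real.exp_pos _
    have hE2 : 1 - l ≤ Real.exp (-l) := by have := Real.add_one_le_exp (-l); linarith
    have hE3 : Real.exp (-l) * (1 + l) ≤ 1 := by
      rw [← hE1]; gcongr; have := Real.add_one_le_exp l; linarith
    have key : Real.exp (-l) * X - (1 - l) * f 0 - Z =
      Real.exp (-l) * (X - f 0 - Z) + (Real.exp (-l) - (1 - l)) * f 0 - (1 - Real.exp (-l)) * Z := by
      ring
    have hEl : Real.exp (-l) ≤ 1 := by simpa using hl0
    rw [key]
    have a1 : |Real.exp (-l) * (X - f 0 - Z)| ≤ M * l ^ 2 := by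
      rw [abs_mul, abs_of_pos hE0]
      calc _ ≤ Real.exp (-l) * (M * (Real.exp l - 1 - l)) := by gcongr
        _ = M * (1 - Real.exp (-l) * (1 + l)) := by linear_combination M * hE1
        _ ≤ M * l ^ 2 := by gcongr; nlinarith
    have a2 : |(Real.exp (-l) - (1 - l)) * f 0| ≤ l ^ 2 * M := by
      rw [abs_mul, abs_of_nonneg (by linarith)]
      gcongr
      nlinarith
    have a3 : |(1 - Real.exp (-l)) * Z| ≤ l * (M * l) := by
      rw [abs_mul, abs_of_nonneg (by linarith)]
      gcongr
      linarith
    calc _ ≤ |Real.exp (-l) * (X - f 0 - Z)| + |(Real.exp (-l) - (1 - l)) * f 0|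
          + |(1 - Real.exp (-l)) * Z| := by
          refine (abs_sub _ _).trans ?_
          gcongr
          exact abs_add_le _ _
      _ ≤ _ := by nlinarith

lemma norm_exp_sub_one_le' {z : ℂ} (hz : z.re ≤ 0) : ‖Complex.exp z - 1‖ ≤ ‖z‖ := by
  have hd : ∀ t ∈ Set.Icc (0 : ℝ) 1,
      HasDerivWithinAt (fun t : ℝ => Complex.exp (t * z)) (Complex.exp (t * z) * z)
        (Set.Icc 0 1) t := fun t _ => by
    have h1 : HasDerivAt (fun t : ℝ => (t : ℂ) * z) (1 * z) t :=
      (Complex.ofRealCLM.hasDerivAt (x := t)).mul_const z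
    simpa using h1.cexp.hasDerivWithinAt
  have := Convex.norm_image_sub_le_of_norm_hasDerivWithin_le (C := ‖z‖) hd (fun t ht => by
    rw [norm_mul, Complex.norm_exp]
    have : ((t : ℂ) * z).re ≤ 0 := by simpa using mul_nonpos_of_nonneg_of_nonpos ht.1 hz
    have := Real.exp_le_one_iff.2 this
    nlinarith [norm_nonneg z]) (convex_Icc 0 1) (x := 0) (y := 1) (by simp) (by simp)
  simpa using this

lemma norm_exp_sub_one_sub_le' {z : ℂ} (hz : z.re ≤ 0) : ‖Complex.exp z - 1 - z‖ ≤ ‖z‖ ^ 2 := by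
  have hd : ∀ t ∈ Set.Icc (0 : ℝ) 1,
      HasDerivWithinAt (fun t : ℝ => Complex.exp (t * z) - t * z) (Complex.exp (t * z) * z - z)
        (Set.Icc 0 1) t := fun t _ => by
    have h1 : HasDerivAt (fun t : ℝ => (t : ℂ) * z) (1 * z) t :=
      (Complex.ofRealCLM.hasDerivAt (x := t)).mul_const z
    have h2 := (h1.cexp.sub h1).hasDerivWithinAt (s := Set.Icc (0 : ℝ) 1)
    rw [one_mul] at h2
    exact h2
  have := Convex.norm_image_sub_le_of_norm_hasDerivWithin_le (C := ‖z‖ ^ 2) hd (fun t ht => by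
    have h0 : ((t : ℂ) * z).re ≤ 0 := by simpa using mul_nonpos_of_nonneg_of_nonpos ht.1 hz
    have h1 := norm_exp_sub_one_le' h0
    have h2 : Complex.exp (t * z) * z - z = (Complex.exp (t * z) - 1) * z := by ring
    have h3 : ‖(t : ℂ) * z‖ ≤ ‖z‖ := by
      rw [norm_mul, Complex.norm_real, Real.norm_eq_abs, abs_of_nonneg ht.1]
      nlinarith [norm_nonneg z, ht.2]
    rw [h2, norm_mul, sq]
    gcongr
    exact h1.trans h3) (convex_Icc 0 1) (x := 0) (y := 1) (by simp) (by simp)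
  have e : Complex.exp z - 1 - z = Complex.exp z - z - 1 := by ring
  rw [e]
  simpa using this

/-- compensated exponential -/
def cexpo (u x : ℝ) : ℂ := Complex.exp (Complex.I * u * x) - 1 - Complex.I * u * x

lemma norm_cexpo_le (u x : ℝ) : ‖cexpo u x‖ ≤ u ^ 2 * x ^ 2 := by
  have := norm_exp_sub_one_sub_le' (z := Complex.I * u * x) (by simp)
  simpa [cexpo, mul_pow] using this

lemma continuous_cexpo : Continuous (fun p : ℝ × ℝ => cexpo p.1 p.2) := by
  unfold cexpo; fun_prop

lemma integrable_cexpo (κ : Measure ℝ) (hκ : Integrable (fun x : ℝ => x ^ 2) κ) (u : ℝ) :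
    Integrable (cexpo u) κ := by
  refine (hκ.const_mul (u ^ 2)).mono' ?_ (ae_of_all _ fun x => norm_cexpo_le u x)
  have : Continuous (cexpo u) := by unfold cexpo; fun_prop
  exact this.aestronglyMeasurable

lemma norm_integral_cexpo_le (κ : Measure ℝ) (hκ : Integrable (fun x : ℝ => x ^ 2) κ) (u : ℝ) :
    ‖∫ x, cexpo u x ∂κ‖ ≤ u ^ 2 * ∫ x, x ^ 2 ∂κ := by
  rw [← integral_const_mul]
  exact norm_integral_le_of_norm_le (hκ.const_mul _) (ae_of_all _ fun x => norm_cexpo_le u x)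

/-- Existence of the law with Lévy measure `κ`, `∫ x² dκ < ∞`, and drift `c`. -/
lemma exists_small_law (κ : Measure ℝ) (hκ : Integrable (fun x : ℝ => x ^ 2) κ) (c : ℝ) :
    ∃ m : Measure ℝ, IsProbabilityMeasure m ∧
      ∀ u : ℝ, charFun m u = Complex.exp (Complex.I * c * u + ∫ x, cexpo u x ∂κ) := by
  let D : ℕ → Set ℝ := fun n => {x | 1 / ((n : ℝ) + 1) < |x|}
  have hDm : ∀ n, MeasurableSet (D n) := fun n =>
    measurableSet_lt measurable_const continuous_abs.measurable
  have hfin : ∀ n, IsFiniteMeasure (κ.restrict (D n)) := fun n => by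
    refine ⟨?_⟩
    rw [Measure.restrict_apply_univ]
    refine lt_of_le_of_lt (measure_mono ?_)
      (hκ.measure_norm_gt_lt_top (ε := (1 / ((n : ℝ) + 1)) ^ 2) (by positivity))
    intro x hx
    simp only [mem_ofPred_eq, Real.norm_eq_abs, abs_pow, D] at hx ⊢
    have h0 : (0 : ℝ) < 1 / ((n : ℝ) + 1) := by positivity
    exact pow_lt_pow_left₀ hx h0.le (by norm_num)
  have hx1 : ∀ n, Integrable (fun x : ℝ => x) (κ.restrict (D n)) := fun n => by
    refine ((hκ.restrict (s := D n)).const_mul ((n : ℝ) + 1)).mono' (by fun_prop) ?_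
    filter_upwards [ae_restrict_mem (hDm n)] with x hx
    simp only [mem_ofPred_eq, D] at hx
    rw [Real.norm_eq_abs, ← sq_abs x]
    rw [div_lt_iff₀ (by positivity)] at hx
    nlinarith [abs_nonneg x]
  choose m hm hcf _ using fun n => @exists_cpois (κ.restrict (D n)) (hfin n)
  let μ : ℕ → Measure ℝ := fun n =>
    (m n).map (fun x => x + (c - ∫ x, x ∂(κ.restrict (D n))))
  have hμ : ∀ n, IsProbabilityMeasure (μ n) := fun n =>
    Measure.isProbabilityMeasure_map (by fun_prop)
  have hcfμ : ∀ n u, charFun (μ n) u = Complex.exp (Complex.I * c * u +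
      ∫ x, (D n).indicator (cexpo u) x ∂κ) := fun n u => by
    have := hfin n
    rw [charFun_map_add_const, hcf, integral_indicator (hDm n), ← Complex.exp_add]
    congr 1
    have hE : Integrable (fun x : ℝ => Complex.exp (Complex.I * u * x)) (κ.restrict (D n)) := by
      refine (integrable_const (1 : ℝ)).mono (by fun_prop) (ae_of_all _ fun x => ?_)
      rw [mul_assoc, ← Complex.ofReal_mul, mul_comm, Complex.norm_exp_ofReal_mul_I]; simp
    have h2 : ∫ x, cexpo u x ∂(κ.restrict (D n)) =
        ∫ x : ℝ, Complex.exp (Complex.I * u * x) ∂(κ.restrict (D n))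
        - ∫ x : ℝ, (1 : ℂ) ∂(κ.restrict (D n))
        - ∫ x : ℝ, Complex.I * u * x ∂(κ.restrict (D n)) := by
      unfold cexpo
      rw [integral_sub, integral_sub hE (integrable_const _)]
      · exact hE.sub (integrable_const _)
      · exact (hx1 n).ofReal.const_mul _
    rw [h2, integral_const_mul, integral_complex_ofReal, charFun_apply_real]
    have h3 : ∀ x : ℝ, Complex.exp (u * x * Complex.I) = Complex.exp (Complex.I * u * x) :=
      fun x => by congr 1; ring
    simp only [h3, integral_const, Complex.real_smul, mul_one, RCLike.inner_apply, conj_trivial]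
    push_cast
    ring
  refine exists_limit_law μ _ ?_ fun u => ?_
  · have h1 : ContinuousAt (fun u : ℝ => ∫ x, cexpo u x ∂κ) 0 := by
      have h0 : ∫ x, cexpo 0 x ∂κ = 0 := by simp [cexpo]
      rw [ContinuousAt, h0]
      refine squeeze_zero_norm (fun u => norm_integral_cexpo_le κ hκ u) ?_
      have : Continuous fun u : ℝ => u ^ 2 * ∫ x, x ^ 2 ∂κ := by fun_prop
      simpa using this.tendsto 0
    exact ((by fun_prop : ContinuousAt (fun u : ℝ => Complex.I * c * u) 0).add h1).cexp
  · simp only [hcfμ]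
    refine (Complex.continuous_exp.tendsto _).comp (tendsto_const_nhds.add ?_)
    refine tendsto_integral_of_dominated_convergence (fun x => u ^ 2 * x ^ 2) (fun n => ?_)
      (hκ.const_mul _) (fun n => ae_of_all _ fun x => ?_) (ae_of_all _ fun x => ?_)
    · exact ((integrable_cexpo κ hκ u).indicator (hDm n)).aestronglyMeasurable
    · exact (norm_indicator_le_norm_self _ _).trans (norm_cexpo_le u x)
    · by_cases hx : x = 0
      · subst hx
        have : ∀ n, (D n).indicator (cexpo u) 0 = cexpo u 0 := fun n => by
          simp [Set.indicator, cexpo]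
        simp only [this]
        exact tendsto_const_nhds
      · refine tendsto_const_nhds.congr' ?_
        have := tendsto_one_div_add_atTop_nhds_zero_nat (𝕜 := ℝ)
        filter_upwards [this.eventually (gt_mem_nhds (abs_pos.2 hx))] with n hn
        rw [indicator_of_mem]
        exact hn

/-- Fourier representation of a test function. -/
structure FRep (g : ℝ → ℝ) (γ : ℝ → ℂ) : Prop where
  cont : Continuous γ
  int : Integrable (fun ξ : ℝ => (1 + ξ ^ 2) ^ 2 * ‖γ ξ‖)
  rep : ∀ x : ℝ, (g x : ℂ) = ∫ ξ : ℝ, γ ξ * Complex.exp (Complex.I * ξ * x)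

lemma norm_exp_I_mul_mul (u x : ℝ) : ‖Complex.exp (Complex.I * u * x)‖ = 1 := by
  rw [mul_assoc, ← Complex.ofReal_mul, mul_comm, Complex.norm_exp_ofReal_mul_I]

namespace FRep
variable {g : ℝ → ℝ} {γ : ℝ → ℂ}

lemma int0 (H : FRep g γ) : Integrable γ := by
  refine H.int.mono' H.cont.aestronglyMeasurable (ae_of_all _ fun ξ => ?_)
  have : 1 ≤ (1 + ξ ^ 2) ^ 2 := by nlinarith [sq_nonneg ξ]
  nlinarith [norm_nonneg (γ ξ)]

lemma int2 (H : FRep g γ) : Integrable (fun ξ : ℝ => (1 + ξ ^ 2) * ‖γ ξ‖) := by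
  refine H.int.mono' (by have := H.cont; fun_prop) (ae_of_all _ fun ξ => ?_)
  rw [Real.norm_eq_abs, abs_of_nonneg (by positivity)]
  gcongr
  nlinarith [sq_nonneg ξ]

lemma int1 (H : FRep g γ) : Integrable (fun ξ : ℝ => γ ξ * (Complex.I * ξ)) := by
  refine H.int2.mono' (by have := H.cont; fun_prop) (ae_of_all _ fun ξ => ?_)
  rw [norm_mul, norm_mul, Complex.norm_I, one_mul, Complex.norm_real, Real.norm_eq_abs, mul_comm]
  gcongr
  nlinarith [sq_nonneg (|ξ| - 1), sq_abs ξ]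

lemma le_K (H : FRep g γ) : ∫ ξ : ℝ, (1 + ξ ^ 2) * ‖γ ξ‖ ≤ ∫ ξ : ℝ, (1 + ξ ^ 2) ^ 2 * ‖γ ξ‖ := by
  refine integral_mono H.int2 H.int fun ξ => ?_
  simp only
  gcongr
  nlinarith [sq_nonneg ξ]

lemma deriv_zero (H : FRep g γ) (hd : HasDerivAt g 0 0) :
    ∫ ξ : ℝ, γ ξ * (Complex.I * ξ) = 0 := by
  have h1 := hasDerivAt_integral_of_dominated_loc_of_deriv_le (μ := volume)
    (F := fun (x : ℝ) (ξ : ℝ) => γ ξ * Complex.exp (Complex.I * ξ * x))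
    (F' := fun (x : ℝ) (ξ : ℝ) => γ ξ * (Complex.exp (Complex.I * ξ * x) * (Complex.I * ξ)))
    (x₀ := 0) (bound := fun ξ => ‖γ ξ * (Complex.I * ξ)‖) (s := univ) univ_mem
    (Eventually.of_forall fun x => by have := H.cont; fun_prop)
    (by simpa using H.int0) (by have := H.cont; fun_prop)
    (ae_of_all _ fun ξ x _ => by
      rw [norm_mul, norm_mul, norm_exp_I_mul_mul, one_mul, norm_mul (γ ξ)])
    H.int1.norm
    (ae_of_all _ fun ξ x _ => by
      have h1 : HasDerivAt (fun x : ℝ => Complex.I * ξ * (x : ℂ)) (Complex.I * ξ * 1) x :=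
        (Complex.ofRealCLM.hasDerivAt (x := x)).const_mul (Complex.I * ξ)
      simpa using h1.cexp.const_mul (γ ξ))
  have h2 := h1.2
  simp_rw [← H.rep] at h2
  have h3 : HasDerivAt (fun x => (g x : ℂ)) ((0 : ℝ) : ℂ) 0 := hd.ofReal_comp
  simpa using h2.unique h3

lemma integrable_comp (H : FRep g γ) (hg : Continuous g) (m : Measure ℝ) [IsFiniteMeasure m]
    (a c : ℝ) : Integrable (fun x => g (a * x + c)) m := by
  refine (integrable_const (∫ ξ, ‖γ ξ‖)).mono' (by fun_prop) (ae_of_all _ fun x => ?_)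
  rw [← Complex.norm_real, H.rep]
  refine (norm_integral_le_integral_norm _).trans (le_of_eq ?_)
  congr 1
  ext ξ
  rw [norm_mul, norm_exp_I_mul_mul, mul_one]

lemma integral_eq (H : FRep g γ) (m : Measure ℝ) [IsProbabilityMeasure m] (a c : ℝ) :
    ((∫ x, g (a * x + c) ∂m : ℝ) : ℂ) =
      ∫ ξ : ℝ, γ ξ * Complex.exp (Complex.I * ξ * c) * charFun m (a * ξ) := by
  rw [← integral_complex_ofReal]
  simp_rw [H.rep]
  rw [integral_integral_swap]
  · congr 1
    ext ξ
    rw [charFun_apply_real, ← integral_const_mul]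
    congr 1
    ext x
    rw [mul_assoc (γ ξ), ← Complex.exp_add]
    congr 2
    push_cast; ring
  · have hc := H.cont
    have : Integrable (fun p : ℝ × ℝ => (fun _ => (1 : ℂ)) p.1 * γ p.2) (m.prod volume) :=
      Integrable.mul_prod (integrable_const (1 : ℂ)) H.int0
    refine this.norm.mono' ?_ (ae_of_all _ fun p => ?_)
    · have : Continuous (Function.uncurry fun (x ξ : ℝ) =>
          γ ξ * Complex.exp (Complex.I * ξ * ((a * x + c : ℝ) : ℂ))) := by
        unfold Function.uncurry; fun_prop
      exact this.aestronglyMeasurable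
    · simp only [Function.uncurry]
      rw [norm_mul, norm_exp_I_mul_mul]; simp

lemma first_order (H : FRep g γ) (m : Measure ℝ) [IsProbabilityMeasure m] (a c D : ℝ)
    (hD : ∀ ξ : ℝ, ‖charFun m (a * ξ) - 1‖ ≤ D * (1 + ξ ^ 2)) :
    |∫ x, g (a * x + c) ∂m - g c| ≤ D * ∫ ξ : ℝ, (1 + ξ ^ 2) ^ 2 * ‖γ ξ‖ := by
  have hc := H.cont
  have hm : Measurable (charFun m) := measurable_charFun
  have hi0 : Integrable (fun ξ : ℝ => γ ξ * Complex.exp (Complex.I * ξ * c)) := by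
    refine H.int0.mono (by fun_prop) (ae_of_all _ fun ξ => ?_)
    rw [norm_mul, norm_exp_I_mul_mul, mul_one]
  have hi1 : Integrable (fun ξ : ℝ => γ ξ * Complex.exp (Complex.I * ξ * c) *
      charFun m (a * ξ)) := by
    refine H.int0.mono ?_ (ae_of_all _ fun ξ => ?_)
    · exact hi0.aestronglyMeasurable.mul
        (hm.comp (measurable_const_mul a)).aestronglyMeasurable
    · rw [norm_mul, norm_mul, norm_exp_I_mul_mul, mul_one]
      have := norm_charFun_le_one (μ := m) (a * ξ)
      nlinarith [norm_nonneg (γ ξ)]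
  have hD0 : 0 ≤ D := by simpa using (norm_nonneg _).trans (hD 0)
  rw [← Real.norm_eq_abs, ← Complex.norm_real, Complex.ofReal_sub, H.integral_eq, H.rep,
    ← integral_sub hi1 hi0]
  calc _ ≤ ∫ ξ : ℝ, D * ((1 + ξ ^ 2) * ‖γ ξ‖) := by
        refine norm_integral_le_of_norm_le (H.int2.const_mul D) (ae_of_all _ fun ξ => ?_)
        rw [show ∀ A B : ℂ, A * B - A = A * (B - 1) by intros; ring, norm_mul, norm_mul,
          norm_exp_I_mul_mul, mul_one]
        have := hD ξ
        nlinarith [norm_nonneg (γ ξ)]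
    _ ≤ _ := by
        rw [integral_const_mul]
        exact mul_le_mul_of_nonneg_left H.le_K hD0

lemma second_order (H : FRep g γ) (hg : Continuous g) (hd : HasDerivAt g 0 0)
    (m : Measure ℝ) [IsProbabilityMeasure m]
    (κ : Measure ℝ) [SFinite κ] (hκ : Integrable (fun x : ℝ => x ^ 2) κ) (a c D : ℝ)
    (hcf : ∀ u : ℝ, charFun m u = Complex.exp (Complex.I * c * u + ∫ x, cexpo u x ∂κ))
    (hD : ∀ ξ : ℝ, ‖Complex.I * c * (a * ξ : ℝ) + ∫ x, cexpo (a * ξ) x ∂κ‖ ≤ D * (1 + ξ ^ 2)) :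
    |∫ x, g (a * x) ∂m - g 0 - ∫ x, (g (a * x) - g 0) ∂κ| ≤
      D ^ 2 * ∫ ξ : ℝ, (1 + ξ ^ 2) ^ 2 * ‖γ ξ‖ := by
  have hc := H.cont
  have hm : Measurable (charFun m) := measurable_charFun
  set Ψ : ℝ → ℂ := fun u => Complex.I * c * u + ∫ x, cexpo u x ∂κ with hΨ
  have hre : ∀ u, (Ψ u).re ≤ 0 := fun u => by
    have h1 := norm_charFun_le_one (μ := m) u
    rw [hcf, Complex.norm_exp] at h1
    exact Real.exp_le_one_iff.1 h1
  -- Fubini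
  have hF : Integrable (fun p : ℝ × ℝ => γ p.1 * cexpo (a * p.1) p.2) (volume.prod κ) := by
    have : Integrable (fun p : ℝ × ℝ => (fun ξ : ℝ => a ^ 2 * ((1 + ξ ^ 2) * ‖γ ξ‖)) p.1 *
        (fun x : ℝ => x ^ 2) p.2) (volume.prod κ) :=
      Integrable.mul_prod (H.int2.const_mul _) hκ
    refine this.mono' ?_ (ae_of_all _ fun p => ?_)
    · have : Continuous fun p : ℝ × ℝ => γ p.1 * cexpo (a * p.1) p.2 := by
        have h2 := continuous_cexpo.comp
          (by fun_prop : Continuous fun p : ℝ × ℝ => (a * p.1, p.2))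
        exact (hc.comp continuous_fst).mul h2
      exact this.aestronglyMeasurable
    · rw [norm_mul]
      have h1 := norm_cexpo_le (a * p.1) p.2
      calc ‖γ p.1‖ * ‖cexpo (a * p.1) p.2‖ ≤ ‖γ p.1‖ * ((a * p.1) ^ 2 * p.2 ^ 2) := by gcongr
        _ = a ^ 2 * (p.1 ^ 2 * ‖γ p.1‖) * p.2 ^ 2 := by ring
        _ ≤ a ^ 2 * ((1 + p.1 ^ 2) * ‖γ p.1‖) * p.2 ^ 2 := by gcongr; linarith
  have hA : Integrable fun ξ : ℝ => γ ξ * ∫ x, cexpo (a * ξ) x ∂κ := by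
    have := hF.integral_prod_left
    simpa only [integral_const_mul] using this
  have hB : Integrable fun ξ : ℝ => γ ξ * (Complex.I * c * (a * ξ : ℝ)) := by
    have := H.int1.const_mul ((c : ℂ) * a)
    refine this.congr (ae_of_all _ fun ξ => ?_)
    simp only; push_cast; ring
  have hi2 : Integrable fun ξ : ℝ => γ ξ * Ψ (a * ξ) := by
    simp only [hΨ, mul_add]
    exact hB.add hA
  have hexp : ∀ x : ℝ, Integrable fun ξ : ℝ => γ ξ * Complex.exp (Complex.I * ξ * x) := fun x => by
    refine H.int0.mono (by fun_prop) (ae_of_all _ fun ξ => ?_)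
    rw [norm_mul, norm_exp_I_mul_mul, mul_one]
  have e2 : ∫ ξ : ℝ, γ ξ * Ψ (a * ξ) = ((∫ x, (g (a * x) - g 0) ∂κ : ℝ) : ℂ) := by
    simp only [hΨ, mul_add]
    rw [integral_add hB hA]
    have hB0 : ∫ ξ : ℝ, γ ξ * (Complex.I * c * (a * ξ : ℝ)) = 0 := by
      have : ∀ ξ : ℝ, γ ξ * (Complex.I * c * (a * ξ : ℝ)) =
          ((c : ℂ) * a) * (γ ξ * (Complex.I * ξ)) := fun ξ => by push_cast; ring
      simp_rw [this]
      rw [integral_const_mul, H.deriv_zero hd, mul_zero]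
    rw [hB0, zero_add]
    simp_rw [← integral_const_mul]
    rw [integral_integral_swap hF, ← integral_complex_ofReal]
    congr 1
    ext x
    rw [Complex.ofReal_sub, H.rep, H.rep]
    have h0 : ∫ ξ : ℝ, γ ξ * Complex.exp (Complex.I * ξ * (0 : ℝ)) = ∫ ξ : ℝ, γ ξ := by simp
    have h4 : ∀ ξ : ℝ, γ ξ * cexpo (a * ξ) x = γ ξ * Complex.exp (Complex.I * ξ * ((a * x : ℝ) : ℂ))
        - γ ξ - (a : ℂ) * x * (γ ξ * (Complex.I * ξ)) := fun ξ => by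
      unfold cexpo; push_cast
      rw [show Complex.I * ((a : ℂ) * ξ) * x = Complex.I * ξ * (a * x) by ring]; ring
    simp_rw [h4]
    have hs1 : Integrable fun ξ : ℝ =>
        γ ξ * Complex.exp (Complex.I * ξ * ((a * x : ℝ) : ℂ)) - γ ξ := (hexp _).sub H.int0
    rw [integral_sub hs1 (H.int1.const_mul _), integral_sub (hexp _) H.int0,
      integral_const_mul, H.deriv_zero hd, h0, mul_zero, sub_zero]
  have hi1 : Integrable (fun ξ : ℝ => γ ξ * charFun m (a * ξ)) := by
    refine H.int0.mono ?_ (ae_of_all _ fun ξ => ?_)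
    · exact H.int0.aestronglyMeasurable.mul
        (hm.comp (measurable_const_mul a)).aestronglyMeasurable
    · rw [norm_mul]
      have := norm_charFun_le_one (μ := m) (a * ξ)
      nlinarith [norm_nonneg (γ ξ)]
  have e1 : ((∫ x, g (a * x) ∂m : ℝ) : ℂ) = ∫ ξ : ℝ, γ ξ * charFun m (a * ξ) := by
    have := H.integral_eq m a 0
    simpa using this
  have e0 : (g 0 : ℂ) = ∫ ξ : ℝ, γ ξ := by rw [H.rep]; simp
  have hs2 : Integrable fun ξ : ℝ => γ ξ * charFun m (a * ξ) - γ ξ := hi1.sub H.int0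
  rw [← Real.norm_eq_abs, ← Complex.norm_real, Complex.ofReal_sub, Complex.ofReal_sub, e1, e0,
    ← e2, ← integral_sub hi1 H.int0, ← integral_sub hs2 hi2, ← integral_const_mul]
  refine norm_integral_le_of_norm_le (H.int.const_mul _) (ae_of_all _ fun ξ => ?_)
  have h1 : γ ξ * charFun m (a * ξ) - γ ξ - γ ξ * Ψ (a * ξ) =
      γ ξ * (Complex.exp (Ψ (a * ξ)) - 1 - Ψ (a * ξ)) := by rw [hcf]; ring
  rw [h1, norm_mul]
  have h2 := norm_exp_sub_one_sub_le' (hre (a * ξ))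
  have h3 : ‖Ψ (a * ξ)‖ ^ 2 ≤ (D * (1 + ξ ^ 2)) ^ 2 := by
    gcongr
    exact hD ξ
  calc _ ≤ ‖γ ξ‖ * (D * (1 + ξ ^ 2)) ^ 2 := by gcongr; exact h2.trans h3
    _ = _ := by ring

end FRep

open scoped FourierTransform SchwartzMap ContDiff in
/-- Smooth compactly supported functions have a Fourier representation. -/
lemma exists_frep (g : ℝ → ℝ) (h1 : HasCompactSupport g) (h2 : ContDiff ℝ ∞ g) :
    ∃ γ, FRep g γ := by
  let gc : ℝ → ℂ := fun x => (g x : ℂ)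
  have hc1 : HasCompactSupport gc := h1.comp_left (g := fun y : ℝ => (y : ℂ)) (by simp)
  have hc2 : ContDiff ℝ ∞ gc := Complex.ofRealCLM.contDiff.comp h2
  let s : 𝓢(ℝ, ℂ) := hc1.toSchwartzMap hc2
  let t : 𝓢(ℝ, ℂ) := 𝓕 s
  have hinv : ∀ x, gc x = ∫ v : ℝ, Complex.exp (((2 * π * v * x : ℝ) : ℂ) * Complex.I) * t v := by
    intro x
    have e : 𝓕⁻ t = s := by simp [t]
    have e2 : (𝓕⁻ t : 𝓢(ℝ, ℂ)) x = gc x := by rw [e]; rfl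
    rw [← e2, SchwartzMap.fourierInv_coe, Real.fourierInv_eq']
    congr 1
    ext v
    simp only [RCLike.inner_apply, conj_trivial, smul_eq_mul]
    rw [show 2 * π * (x * v) = 2 * π * v * x by ring]
  have hpi : (2 * π) ≠ 0 := by positivity
  have hpi' : (0 : ℝ) < 2 * π := by positivity
  have hti : Integrable (fun v : ℝ => (1 + (2 * π * v) ^ 2) ^ 2 * ‖t v‖) := by
    have h0 := t.integrable_pow_mul volume 0
    have h2 := t.integrable_pow_mul volume 2
    have h4 := t.integrable_pow_mul volume 4
    refine (h0.add ((h2.const_mul (2 * (2 * π) ^ 2)).add (h4.const_mul ((2 * π) ^ 4)))).congr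
      (ae_of_all _ fun v => ?_)
    simp only [Pi.add_apply, Real.norm_eq_abs]
    rw [show |v| ^ 4 = (|v| ^ 2) ^ 2 by ring, sq_abs]
    ring
  refine ⟨fun ξ => ((2 * π)⁻¹ : ℝ) * t (ξ / (2 * π)), ?_, ?_, fun x => ?_⟩
  · have := t.continuous; fun_prop
  · have := (hti.comp_div hpi).const_mul ((2 * π)⁻¹)
    refine this.congr (ae_of_all _ fun ξ => ?_)
    simp only [norm_mul, Complex.norm_real, Real.norm_eq_abs, abs_inv, abs_of_pos hpi']
    rw [mul_div_cancel₀ _ hpi]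
    ring
  · change gc x = _
    rw [hinv]
    have := Measure.integral_comp_div
      (fun v : ℝ => Complex.exp (((2 * π * v * x : ℝ) : ℂ) * Complex.I) * t v) (2 * π)
    rw [abs_of_pos hpi', Complex.real_smul] at this
    have e3 : ∀ ξ : ℝ, (((2 * π)⁻¹ : ℝ) : ℂ) * t (ξ / (2 * π)) * Complex.exp (Complex.I * ξ * x) =
      (((2 * π)⁻¹ : ℝ) : ℂ) * (Complex.exp (((2 * π * (ξ / (2 * π)) * x : ℝ) : ℂ) * Complex.I) *
        t (ξ / (2 * π))) := fun ξ => by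
      rw [mul_div_cancel₀ _ hpi]
      push_cast
      rw [show (Complex.I * ξ * x : ℂ) = ξ * x * Complex.I by ring]; ring
    simp_rw [e3]
    rw [integral_const_mul, this, ← mul_assoc, ← Complex.ofReal_mul, inv_mul_cancel₀ hpi]
    simp

/-- truncation weight -/
def mw (v : ℝ) : ℝ := min 1 (v ^ 2)

lemma mw_nonneg (v : ℝ) : 0 ≤ mw v := le_min zero_le_one (sq_nonneg v)
lemma mw_le_one (v : ℝ) : mw v ≤ 1 := min_le_left _ _
lemma mw_le_sq (v : ℝ) : mw v ≤ v ^ 2 := min_le_right _ _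
lemma continuous_mw : Continuous mw := by unfold mw; fun_prop

lemma integrable_of_even_Ioi {f : ℝ → ℝ} (he : ∀ x, f (-x) = f x)
    (h : IntegrableOn f (Ioi 0)) : Integrable f := by
  have h2 : IntegrableOn f (Iic 0) := by
    have := (integrableOn_Ici_iff_integrableOn_Ioi (f := f) (b := 0)).2 h
    have h3 := this.comp_neg
    simp only [he] at h3
    simpa using h3
  rw [← integrableOn_univ, ← Iic_union_Ioi (a := (0:ℝ))]
  exact h2.union h

lemma integrable_mw {a : ℝ} (h1 : 1 < a) (h3 : a < 3) :
    Integrable (fun v : ℝ => mw v * |v| ^ (-a)) := by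
  refine integrable_of_even_Ioi (fun x => by simp [mw]) ?_
  rw [← Ioc_union_Ioi_eq_Ioi (zero_le_one' ℝ)]
  have hm : Measurable (fun v : ℝ => mw v * |v| ^ (-a)) := by
    have := continuous_mw.measurable
    fun_prop
  refine IntegrableOn.union ?_ ?_
  · have : IntegrableOn (fun x : ℝ => x ^ (2 - a)) (Ioc 0 1) := by
      rw [← intervalIntegrable_iff_integrableOn_Ioc_of_le zero_le_one]
      exact intervalIntegral.intervalIntegrable_rpow' (by linarith)
    refine Integrable.mono' this hm.aestronglyMeasurable ?_
    filter_upwards [ae_restrict_mem measurableSet_Ioc] with x hx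
    rw [Real.norm_eq_abs, abs_of_nonneg (mul_nonneg (mw_nonneg _) (by positivity)), abs_of_pos hx.1]
    calc mw x * x ^ (-a) ≤ x ^ 2 * x ^ (-a) := by
          gcongr
          · exact Real.rpow_nonneg hx.1.le _
          · exact mw_le_sq x
      _ = x ^ (2 - a) := by
          rw [← Real.rpow_natCast, ← Real.rpow_add hx.1]; norm_num; ring_nf
  · have : IntegrableOn (fun x : ℝ => x ^ (-a)) (Ioi 1) :=
      integrableOn_Ioi_rpow_of_lt (by linarith) one_pos
    refine Integrable.mono' this hm.aestronglyMeasurable ?_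
    filter_upwards [ae_restrict_mem measurableSet_Ioi] with x hx
    have hx0 : 0 < x := lt_trans one_pos hx
    rw [Real.norm_eq_abs, abs_of_nonneg (mul_nonneg (mw_nonneg _) (by positivity)), abs_of_pos hx0]
    calc mw x * x ^ (-a) ≤ 1 * x ^ (-a) := by
          gcongr
          exact mw_le_one x
      _ = _ := one_mul _

def mI (a : ℝ) : ℝ := ∫ v : ℝ, mw v * |v| ^ (-a)

lemma mI_nonneg (a : ℝ) : 0 ≤ mI a :=
  integral_nonneg fun v => mul_nonneg (mw_nonneg _) (by positivity)

lemma scale_aux {e a : ℝ} (he : 0 < e) (x : ℝ) : |x| ^ (-a) = e ^ (-a) * |x / e| ^ (-a) := by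
  rw [abs_div, abs_of_pos he, Real.div_rpow (abs_nonneg x) he.le]
  have : e ^ (-a) ≠ 0 := (Real.rpow_pos_of_pos he _).ne'
  field_simp

lemma bound_mw {a e K : ℝ} (h1 : 1 < a) (h3 : a < 3) (he : 0 < e) {F : ℝ → ℝ}
    (hF : AEStronglyMeasurable F volume)
    (hb : ∀ x, |F x| ≤ K * (mw (x / e) * |x| ^ (-a))) :
    Integrable F ∧ ∫ x, |F x| ≤ K * mI a * e ^ (1 - a) := by
  have h0 : (fun x : ℝ => K * (mw (x / e) * |x| ^ (-a)))
      = fun x : ℝ => K * e ^ (-a) * (fun v : ℝ => mw v * |v| ^ (-a)) (x / e) := by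
    ext x
    simp only
    rw [scale_aux he x]; ring
  have hi : Integrable (fun x : ℝ => K * (mw (x / e) * |x| ^ (-a))) := by
    rw [h0]
    exact ((integrable_mw h1 h3).comp_div he.ne').const_mul _
  have hF2 : Integrable F := hi.mono' hF (ae_of_all _ hb)
  refine ⟨hF2, (integral_mono hF2.abs hi hb).trans (le_of_eq ?_)⟩
  rw [h0, integral_const_mul, Measure.integral_comp_div (fun v : ℝ => mw v * |v| ^ (-a)), abs_of_pos he, smul_eq_mul]
  rw [sub_eq_add_neg, Real.rpow_add he, Real.rpow_one]
  simp only [mI]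
  ring

/-- measure with given real density -/
def dm (s : ℝ → ℝ) : Measure ℝ := volume.withDensity fun x => ENNReal.ofReal (s x)

instance (s : ℝ → ℝ) : SFinite (dm s) := by unfold dm; infer_instance

lemma dm_integral {E : Type*} [NormedAddCommGroup E] [NormedSpace ℝ E] {s : ℝ → ℝ}
    (hs : Measurable s) (h0 : ∀ x, 0 ≤ s x) (f : ℝ → E) :
    ∫ x, f x ∂(dm s) = ∫ x, s x • f x := by
  unfold dm
  rw [integral_withDensity_eq_integral_toReal_smul (by fun_prop) (by simp)]
  simp [ENNReal.toReal_ofReal (h0 _)]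

lemma dm_integrable {E : Type*} [NormedAddCommGroup E] [NormedSpace ℝ E] {s : ℝ → ℝ}
    (hs : Measurable s) (h0 : ∀ x, 0 ≤ s x) (f : ℝ → E) :
    Integrable f (dm s) ↔ Integrable (fun x => s x • f x) := by
  unfold dm
  rw [integrable_withDensity_iff_integrable_smul' (by fun_prop) (by simp)]
  simp [ENNReal.toReal_ofReal (h0 _)]

lemma dm_finite {s : ℝ → ℝ} (h : Integrable s) : IsFiniteMeasure (dm s) := by
  unfold dm
  exact isFiniteMeasure_withDensity_ofReal h.2

lemma dm_mass {s : ℝ → ℝ} (hs : Measurable s) (h0 : ∀ x, 0 ≤ s x) :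
    (dm s).real univ = ∫ x, s x := by
  have := dm_integral hs h0 (fun _ => (1:ℝ))
  simpa using this

/-- reference density -/
def s0 (Y Cp Cm : ℝ) : ℝ → ℝ := levyDensity Y Cp Cm (fun _ => 1)

/-- Standing assumptions on the Levy density. -/
structure LP (Y Cp Cm : ℝ) (s G : ℝ → ℝ) (D0 K : ℝ) : Prop where
  hY1 : 1 < Y
  hY2 : Y < 2
  hCp : 0 < Cp
  hCm : 0 < Cm
  meas : Measurable s
  nonneg : ∀ x, 0 ≤ s x
  le : ∀ x, s x ≤ D0 * |x| ^ (-(1 + Y))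
  le0 : ∀ x, s0 Y Cp Cm x ≤ D0 * |x| ^ (-(1 + Y))
  hD0 : 0 ≤ D0
  hK : 0 ≤ K
  Gint : Integrable G
  Gnn : ∀ x, 0 ≤ G x
  diff : ∀ x, |s x - s0 Y Cp Cm x| ≤ G x + K * |x| ^ (-Y)

lemma measurable_levyDensity {Y Cp Cm : ℝ} {q : ℝ → ℝ} (hq : Measurable q) :
    Measurable (levyDensity Y Cp Cm q) := by
  unfold levyDensity
  refine Measurable.mul (Measurable.mul ?_ hq) (by fun_prop)
  refine Measurable.ite measurableSet_Ioi measurable_const ?_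
  exact Measurable.ite measurableSet_Iio measurable_const measurable_const

lemma measurable_s0 (Y Cp Cm : ℝ) : Measurable (s0 Y Cp Cm) :=
  measurable_levyDensity measurable_const

lemma s0_nonneg {Y Cp Cm : ℝ} (h1 : 0 < Cp) (h2 : 0 < Cm) (x : ℝ) : 0 ≤ s0 Y Cp Cm x := by
  unfold s0 levyDensity
  refine mul_nonneg (mul_nonneg ?_ zero_le_one) (by positivity)
  split_ifs <;> linarith

def θ1 : ContDiffBump (0 : ℝ) := ⟨1/16, 1/8, by norm_num, by norm_num⟩
def θ2 : ContDiffBump (0 : ℝ) := ⟨1/8, 1/4, by norm_num, by norm_num⟩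
def θ3 : ContDiffBump (0 : ℝ) := ⟨4, 8, by norm_num, by norm_num⟩

lemma θ1_one {v : ℝ} (h : |v| ≤ 1/16) : θ1 v = 1 :=
  θ1.one_of_mem_closedBall (by simpa [θ1] using h)
lemma θ1_zero {v : ℝ} (h : 1/8 ≤ |v|) : θ1 v = 0 :=
  θ1.zero_of_le_dist (by simpa [θ1] using h)
lemma θ2_one {v : ℝ} (h : |v| ≤ 1/8) : θ2 v = 1 :=
  θ2.one_of_mem_closedBall (by simpa [θ2] using h)
lemma θ2_zero {v : ℝ} (h : 1/4 ≤ |v|) : θ2 v = 0 :=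
  θ2.zero_of_le_dist (by simpa [θ2] using h)
lemma θ3_one {v : ℝ} (h : |v| ≤ 4) : θ3 v = 1 :=
  θ3.one_of_mem_closedBall (by simpa [θ3] using h)
lemma θ3_zero {v : ℝ} (h : 8 ≤ |v|) : θ3 v = 0 :=
  θ3.zero_of_le_dist (by simpa [θ3] using h)

lemma θ1_sq_le (v : ℝ) : θ1 v * v ^ 2 ≤ mw v := by
  by_cases h : 1/8 ≤ |v|
  · rw [θ1_zero h, zero_mul]; exact mw_nonneg v
  · push Not at h
    have h2 : v ^ 2 ≤ 1 := by rw [← sq_abs]; nlinarith [abs_nonneg v]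
    rw [mw, min_eq_right h2]
    nlinarith [θ1.le_one (x := v), sq_nonneg v]

lemma one_sub_θ1_nonneg (v : ℝ) : 0 ≤ 1 - θ1 v := sub_nonneg.2 θ1.le_one

lemma one_sub_θ1_le (v : ℝ) : 1 - θ1 v ≤ 256 * mw v := by
  by_cases h : |v| ≤ 1/16
  · rw [θ1_one h, sub_self]; have := mw_nonneg v; positivity
  · push Not at h
    have h2 : 1/256 ≤ v ^ 2 := by rw [← sq_abs]; nlinarith [abs_nonneg v]
    have : 1/256 ≤ mw v := le_min (by norm_num) h2
    have := θ1.nonneg (x := v)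
    linarith

def sS (s : ℝ → ℝ) (e x : ℝ) : ℝ := θ1 (x / e) * s x
def sB (s : ℝ → ℝ) (e x : ℝ) : ℝ := (1 - θ1 (x / e)) * s x

lemma psi_aux (x : ℝ) : (if |x| ≤ 1 then x else 0 : ℝ) = indicator {y : ℝ | |y| ≤ 1} id x := by
  simp [indicator]

lemma measurable_trunc : Measurable (fun x : ℝ => (if |x| ≤ 1 then x else 0 : ℝ)) :=
  Measurable.ite (measurableSet_le (by fun_prop) (by fun_prop)) measurable_id measurable_const

def psiG (b : ℝ) (s : ℝ → ℝ) (u : ℝ) : ℂ :=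
  Complex.I * b * u +
    ∫ x : ℝ,
      (Complex.exp (Complex.I * u * x) - 1 - (if |x| ≤ 1 then Complex.I * u * x else 0))
      ∂(dm s)

def bS (b : ℝ) (s : ℝ → ℝ) (e : ℝ) : ℝ := b - ∫ x, sB s e x * (if |x| ≤ 1 then x else 0 : ℝ)

namespace LP
variable {Y Cp Cm : ℝ} {s G : ℝ → ℝ} {D0 K : ℝ}

lemma meas_S (H : LP Y Cp Cm s G D0 K) (e : ℝ) : Measurable (sS s e) := by
  have := H.meas
  have := θ1.continuous.measurable
  unfold sS; fun_prop

lemma meas_B (H : LP Y Cp Cm s G D0 K) (e : ℝ) : Measurable (sB s e) := by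
  have := H.meas
  have := θ1.continuous.measurable
  unfold sB; fun_prop

lemma nn_S (H : LP Y Cp Cm s G D0 K) (e x : ℝ) : 0 ≤ sS s e x := mul_nonneg θ1.nonneg (H.nonneg x)
lemma nn_B (H : LP Y Cp Cm s G D0 K) (e x : ℝ) : 0 ≤ sB s e x :=
  mul_nonneg (one_sub_θ1_nonneg _) (H.nonneg x)

lemma bd_S (H : LP Y Cp Cm s G D0 K) {e : ℝ} (he : 0 < e) :
    Integrable (fun x => sS s e x * x ^ 2) ∧
    ∫ x, sS s e x * x ^ 2 ≤ D0 * mI (1 + Y) * e ^ (2 - Y) := by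
  have h1 := H.hY1
  have h2 := H.hY2
  have := bound_mw (a := 1 + Y) (K := D0 * e ^ 2) (F := fun x => sS s e x * x ^ 2)
    (by linarith) (by linarith) he
    ((H.meas_S e).mul (by fun_prop)).aestronglyMeasurable (fun x => by
      rw [abs_of_nonneg (mul_nonneg (H.nn_S e x) (sq_nonneg x))]
      calc sS s e x * x ^ 2 = e ^ 2 * (θ1 (x / e) * (x / e) ^ 2) * s x := by
            unfold sS; field_simp
        _ ≤ e ^ 2 * mw (x / e) * (D0 * |x| ^ (-(1 + Y))) := by
            gcongr
            · exact H.nonneg x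
            · have := mw_nonneg (x / e); positivity
            · exact θ1_sq_le _
            · exact H.le x
        _ = _ := by ring)
  refine ⟨this.1, ?_⟩
  have h3 : ∀ x, |sS s e x * x ^ 2| = sS s e x * x ^ 2 := fun x =>
    abs_of_nonneg (mul_nonneg (H.nn_S e x) (sq_nonneg x))
  simp only [h3] at this
  refine this.2.trans (le_of_eq ?_)
  rw [show 2 - Y = 2 + (1 - (1 + Y)) by ring, Real.rpow_add he]
  norm_num; ring

lemma bd_B (H : LP Y Cp Cm s G D0 K) {e : ℝ} (he : 0 < e) :
    Integrable (sB s e) ∧ ∫ x, sB s e x ≤ 256 * D0 * mI (1 + Y) * e ^ (-Y) := by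
  have h1 := H.hY1
  have h2 := H.hY2
  have := bound_mw (a := 1 + Y) (K := 256 * D0) (F := sB s e)
    (by linarith) (by linarith) he
    (H.meas_B e).aestronglyMeasurable (fun x => by
      rw [abs_of_nonneg (H.nn_B e x)]
      calc sB s e x ≤ (256 * mw (x / e)) * (D0 * |x| ^ (-(1 + Y))) := by
            unfold sB
            gcongr
            · exact H.nonneg x
            · have := mw_nonneg (x / e); positivity
            · exact one_sub_θ1_le _
            · exact H.le x
        _ = _ := by ring)
  refine ⟨this.1, ?_⟩
  have h3 : ∀ x, |sB s e x| = sB s e x := fun x => abs_of_nonneg (H.nn_B e x)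
  simp only [h3] at this
  refine this.2.trans (le_of_eq ?_)
  rw [show (1 - (1 + Y)) = -Y by ring]

lemma bd_Bx (H : LP Y Cp Cm s G D0 K) {e : ℝ} (he : 0 < e) :
    Integrable (fun x => sB s e x * (if |x| ≤ 1 then x else 0 : ℝ)) ∧
    |∫ x, sB s e x * (if |x| ≤ 1 then x else 0 : ℝ)| ≤ 256 * D0 * mI Y * e ^ (1 - Y) := by
  have h1 := H.hY1
  have h2 := H.hY2
  have := bound_mw (a := Y) (K := 256 * D0)
    (F := fun x => sB s e x * (if |x| ≤ 1 then x else 0 : ℝ))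
    (by linarith) (by linarith) he
    ((H.meas_B e).mul measurable_trunc).aestronglyMeasurable (fun x => by
      have hx : |(if |x| ≤ 1 then x else 0 : ℝ)| ≤ |x| := by
        split_ifs <;> simp
      rw [abs_mul, abs_of_nonneg (H.nn_B e x)]
      calc sB s e x * |(if |x| ≤ 1 then x else 0 : ℝ)|
          ≤ (256 * mw (x / e)) * (D0 * |x| ^ (-(1 + Y))) * |x| := by
            unfold sB
            have := H.nonneg x
            have := mw_nonneg (x / e)
            have := H.hD0
            have := one_sub_θ1_nonneg (x / e)
            gcongr
            · exact one_sub_θ1_le _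
            · exact H.le x
        _ ≤ _ := by
            rcases eq_or_ne x 0 with rfl | hx0
            · simp
              rw [Real.zero_rpow (by linarith)]; simp
            · have : |x| ^ (-Y) = |x| ^ (-(1 + Y)) * |x| := by
                rw [show -Y = -(1 + Y) + 1 by ring, Real.rpow_add (abs_pos.2 hx0), Real.rpow_one]
              rw [this]
              exact le_of_eq (by ring))
  refine ⟨this.1, ?_⟩
  exact (abs_integral_le_integral_abs).trans this.2

lemma bd_diff (H : LP Y Cp Cm s G D0 K) {e A : ℝ} (he : 0 < e) (he1 : e ≤ 1) {φ : ℝ → ℝ}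
    (hφ : Measurable φ) (hφ2 : ∀ x, |φ x| ≤ A * mw (x / e)) :
    Integrable (fun x => φ x * (s x - s0 Y Cp Cm x)) ∧
    ∫ x, |φ x * (s x - s0 Y Cp Cm x)| ≤ A * ((∫ x, G x) + K * mI Y) * e ^ (1 - Y) := by
  have h1 := H.hY1
  have h2 := H.hY2
  have hK := H.hK
  have hA : 0 ≤ A := by
    have h3 := hφ2 e
    rw [div_self he.ne'] at h3
    have : mw 1 = 1 := by simp [mw]
    rw [this, mul_one] at h3
    exact (abs_nonneg _).trans h3
  have hcm := continuous_mw.measurable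
  have hB := bound_mw (a := Y) (K := A * K) (e := e)
    (F := fun x => A * K * (mw (x / e) * |x| ^ (-Y)))
    h1 (by linarith) he (Measurable.aestronglyMeasurable (by fun_prop)) (fun x => by
      rw [abs_of_nonneg]
      have := mw_nonneg (x / e)
      positivity)
  have hpt : ∀ x, |φ x * (s x - s0 Y Cp Cm x)| ≤ A * G x + A * K * (mw (x / e) * |x| ^ (-Y)) := by
    intro x
    rw [abs_mul]
    have hm := mw_nonneg (x / e)
    have hm1 := mw_le_one (x / e)
    have hG := H.Gnn x
    calc |φ x| * |s x - s0 Y Cp Cm x| ≤ (A * mw (x / e)) * (G x + K * |x| ^ (-Y)) := by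
          gcongr
          · exact hφ2 x
          · exact H.diff x
      _ = A * (mw (x / e) * G x) + A * K * (mw (x / e) * |x| ^ (-Y)) := by ring
      _ ≤ A * (1 * G x) + A * K * (mw (x / e) * |x| ^ (-Y)) := by gcongr
      _ = _ := by ring
  have hdom := (H.Gint.const_mul A).add hB.1
  have hi : Integrable (fun x => φ x * (s x - s0 Y Cp Cm x)) :=
    hdom.mono' (hφ.mul (H.meas.sub (measurable_s0 _ _ _))).aestronglyMeasurable (ae_of_all _ hpt)
  refine ⟨hi, (integral_mono hi.abs hdom hpt).trans ?_⟩
  have : ∫ x, ((fun x => A * G x) + fun x => A * K * (mw (x / e) * |x| ^ (-Y))) x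
      = A * (∫ x, G x) + ∫ x, A * K * (mw (x / e) * |x| ^ (-Y)) := by
    rw [← integral_const_mul]
    exact integral_add (H.Gint.const_mul A) hB.1
  rw [this]
  have h4 := (le_abs_self _).trans ((abs_integral_le_integral_abs).trans hB.2)
  have h5 : 1 ≤ e ^ (1 - Y) := Real.one_le_rpow_of_pos_of_le_one_of_nonpos he he1 (by linarith)
  have h6 : 0 ≤ ∫ x, G x := integral_nonneg H.Gnn
  calc A * (∫ x, G x) + ∫ x, A * K * (mw (x / e) * |x| ^ (-Y))
      ≤ A * (∫ x, G x) * e ^ (1 - Y) + A * K * mI Y * e ^ (1 - Y) := by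
        refine add_le_add ?_ h4
        exact le_mul_of_one_le_right (by positivity) h5
    _ = _ := by ring

lemma int_S (H : LP Y Cp Cm s G D0 K) {e : ℝ} (he : 0 < e) :
    Integrable (fun x : ℝ => x ^ 2) (dm (sS s e)) := by
  rw [dm_integrable (H.meas_S e) (H.nn_S e)]
  exact (H.bd_S he).1

lemma psi_decomp (H : LP Y Cp Cm s G D0 K) (b : ℝ) {e : ℝ} (he : 0 < e) (he1 : e ≤ 1) (u : ℝ) :
    psiG b s u = (Complex.I * bS b s e * u + ∫ x, cexpo u x ∂(dm (sS s e)))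
      + (charFun (dm (sB s e)) u - ((dm (sB s e)).real univ : ℝ)) := by
  have i1 : Integrable (fun x => sS s e x • cexpo u x) := by
    rw [← dm_integrable (H.meas_S e) (H.nn_S e)]
    exact integrable_cexpo _ (H.int_S he) u
  have i0 : Integrable (fun x => (sB s e x : ℂ)) := (H.bd_B he).1.ofReal
  have i2 : Integrable (fun x : ℝ => sB s e x • Complex.exp (u * x * Complex.I)) := by
    refine (H.bd_B he).1.mono (by have := H.meas_B e; fun_prop) (ae_of_all _ fun x => ?_)
    rw [norm_smul, ← Complex.ofReal_mul, Complex.norm_exp_ofReal_mul_I, mul_one]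
  have i3 : Integrable (fun x : ℝ => ((sB s e x * (if |x| ≤ 1 then x else 0 : ℝ) : ℝ) : ℂ)) :=
    (H.bd_Bx he).1.ofReal
  rw [psiG, dm_integral H.meas H.nonneg, dm_integral (H.meas_S e) (H.nn_S e), charFun_apply_real,
    dm_integral (H.meas_B e) (H.nn_B e), dm_mass (H.meas_B e) (H.nn_B e), bS, ← integral_complex_ofReal]
  have hpt : ∀ x : ℝ, s x • (Complex.exp (Complex.I * u * x) - 1
        - (if |x| ≤ 1 then Complex.I * u * x else 0))
      = sS s e x • cexpo u x + (sB s e x • Complex.exp (u * x * Complex.I) - (sB s e x : ℂ))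
        - Complex.I * u * ((sB s e x * (if |x| ≤ 1 then x else 0 : ℝ) : ℝ) : ℂ) := by
    intro x
    have hE : Complex.exp (u * x * Complex.I) = Complex.exp (Complex.I * u * x) := by
      congr 1; ring
    rw [hE]
    by_cases hx : |x| ≤ 1
    · simp only [hx, if_true, sS, sB, cexpo, Complex.real_smul]
      push_cast
      ring
    · have : θ1 (x / e) = 0 := by
        apply θ1_zero
        push Not at hx
        rw [abs_div, abs_of_pos he, le_div_iff₀ he]
        linarith
      simp only [hx, if_false, sS, sB, cexpo, Complex.real_smul, this]
      push_cast
      ring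
  simp_rw [hpt]
  have i20 : Integrable (fun x : ℝ => sB s e x • Complex.exp (u * x * Complex.I)
      - (sB s e x : ℂ)) := i2.sub i0
  have i120 : Integrable (fun x : ℝ => sS s e x • cexpo u x
      + (sB s e x • Complex.exp (u * x * Complex.I) - (sB s e x : ℂ))) := i1.add i20
  rw [integral_sub i120 (i3.const_mul _), integral_add i1 i20,
    integral_sub i2 i0, integral_const_mul]
  simp only [integral_complex_ofReal]
  push_cast
  ring

def Cψ (Y D0 b : ℝ) : ℝ := |b| + 256 * D0 * mI Y + 512 * D0 * mI (1 + Y) + D0 * mI (1 + Y)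

lemma psiS_le (H : LP Y Cp Cm s G D0 K) (b : ℝ) {e : ℝ} (he : 0 < e) (he1 : e ≤ 1) (u : ℝ) :
    ‖Complex.I * bS b s e * u + ∫ x, cexpo u x ∂(dm (sS s e))‖
      ≤ (|b| + 256 * D0 * mI Y + D0 * mI (1 + Y)) * e ^ (-Y) * (1 + (e * u) ^ 2) := by
  have h1 := H.hY1
  have hD := H.hD0
  have hmY := mI_nonneg Y
  have hm1 := mI_nonneg (1 + Y)
  have hp : 0 < e ^ (-Y) := Real.rpow_pos_of_pos he _
  have h5 : 1 ≤ e ^ (1 - Y) := Real.one_le_rpow_of_pos_of_le_one_of_nonpos he he1 (by linarith)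
  have hb : |bS b s e| ≤ (|b| + 256 * D0 * mI Y) * e ^ (1 - Y) := by
    rw [bS]
    refine (abs_sub _ _).trans ?_
    have := (H.bd_Bx he).2
    have h6 : |b| ≤ |b| * e ^ (1 - Y) := le_mul_of_one_le_right (abs_nonneg b) h5
    linarith
  have e1 : e ^ (1 - Y) = e ^ (-Y) * e := by
    rw [show 1 - Y = -Y + 1 by ring, Real.rpow_add he, Real.rpow_one]
  have e2 : e ^ (2 - Y) = e ^ (-Y) * e ^ 2 := by
    rw [show 2 - Y = -Y + 2 by ring, Real.rpow_add he]; norm_num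
  have hc := norm_integral_cexpo_le _ (H.int_S he) u
  rw [dm_integral (H.meas_S e) (H.nn_S e) (fun x : ℝ => x ^ 2)] at hc
  have hc' : ‖∫ x, cexpo u x ∂(dm (sS s e))‖ ≤ u ^ 2 * ∫ x, sS s e x * x ^ 2 := by
    simpa only [smul_eq_mul] using hc
  have hS := (H.bd_S he).2
  have habs : e * |u| ≤ 1 + (e * u) ^ 2 := by
    have : (e * u) ^ 2 = (e * |u|) ^ 2 := by rw [mul_pow, mul_pow, sq_abs]
    rw [this]
    nlinarith [sq_nonneg (e * |u| - 1)]
  calc ‖Complex.I * bS b s e * u + ∫ x, cexpo u x ∂(dm (sS s e))‖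
      ≤ |bS b s e| * |u| + u ^ 2 * ∫ x, sS s e x * x ^ 2 := by
        refine (norm_add_le _ _).trans (add_le_add (le_of_eq ?_) hc')
        simp
    _ ≤ (|b| + 256 * D0 * mI Y) * e ^ (1 - Y) * |u| + u ^ 2 * (D0 * mI (1 + Y) * e ^ (2 - Y)) := by
        gcongr
    _ = (|b| + 256 * D0 * mI Y) * e ^ (-Y) * (e * |u|)
          + (D0 * mI (1 + Y)) * e ^ (-Y) * (e * u) ^ 2 := by rw [e1, e2]; ring
    _ ≤ (|b| + 256 * D0 * mI Y) * e ^ (-Y) * (1 + (e * u) ^ 2)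
          + (D0 * mI (1 + Y)) * e ^ (-Y) * (1 + (e * u) ^ 2) := by
        gcongr
        linarith
    _ = _ := by ring

lemma psi_le (H : LP Y Cp Cm s G D0 K) (b : ℝ) {e : ℝ} (he : 0 < e) (he1 : e ≤ 1) (u : ℝ) :
    ‖psiG b s u‖ ≤ Cψ Y D0 b * e ^ (-Y) * (1 + (e * u) ^ 2) := by
  have hD := H.hD0
  have hm1 := mI_nonneg (1 + Y)
  have hp : 0 < e ^ (-Y) := Real.rpow_pos_of_pos he _
  have := dm_finite (H.bd_B he).1
  rw [H.psi_decomp b he he1 u]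
  have h1 := H.psiS_le b he he1 u
  have h2 := (H.bd_B he).2
  rw [← dm_mass (H.meas_B e) (H.nn_B e)] at h2
  have h3 : ‖charFun (dm (sB s e)) u - ((dm (sB s e)).real univ : ℝ)‖
      ≤ 2 * (256 * D0 * mI (1 + Y) * e ^ (-Y)) := by
    refine (norm_sub_le _ _).trans ?_
    have := norm_charFun_le (μ := dm (sB s e)) u
    rw [Complex.norm_real, Real.norm_eq_abs, abs_of_nonneg measureReal_nonneg]
    linarith
  have h4 : 2 * (256 * D0 * mI (1 + Y) * e ^ (-Y)) ≤
      (512 * D0 * mI (1 + Y)) * e ^ (-Y) * (1 + (e * u) ^ 2) := by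
    have : 0 ≤ (512 * D0 * mI (1 + Y)) * e ^ (-Y) := by positivity
    nlinarith [sq_nonneg (e * u)]
  refine (norm_add_le _ _).trans ?_
  rw [Cψ]
  linarith

end LP

def IsSmall (b : ℝ) (s : ℝ → ℝ) (e h : ℝ) (m : Measure ℝ) : Prop :=
  ∀ u : ℝ, charFun m u = Complex.exp (Complex.I * ((h * bS b s e : ℝ) : ℂ) * u
    + ∫ x, cexpo u x ∂(dm (fun x => h * sS s e x)))

def IsCP (A m : Measure ℝ) : Prop :=
  ∀ (f : ℝ → ℝ) (M : ℝ), Measurable f → (∀ x, |f x| ≤ M) →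
    |∫ x, f x ∂m - (1 - A.real univ) * f 0 - ∫ x, f x ∂A| ≤ 3 * M * A.real univ ^ 2

def CS (Y D0 b : ℝ) : ℝ := |b| + 256 * D0 * mI Y + D0 * mI (1 + Y)

namespace LP
variable {Y Cp Cm : ℝ} {s G : ℝ → ℝ} {D0 K : ℝ}

lemma hmeas_S (H : LP Y Cp Cm s G D0 K) (h e : ℝ) : Measurable (fun x => h * sS s e x) :=
  (H.meas_S e).const_mul h
lemma hmeas_B (H : LP Y Cp Cm s G D0 K) (h e : ℝ) : Measurable (fun x => h * sB s e x) :=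
  (H.meas_B e).const_mul h
lemma hnn_S (H : LP Y Cp Cm s G D0 K) {h : ℝ} (hh : 0 < h) (e x : ℝ) : 0 ≤ h * sS s e x :=
  mul_nonneg hh.le (H.nn_S e x)
lemma hnn_B (H : LP Y Cp Cm s G D0 K) {h : ℝ} (hh : 0 < h) (e x : ℝ) : 0 ≤ h * sB s e x :=
  mul_nonneg hh.le (H.nn_B e x)

lemma hIntg_S (H : LP Y Cp Cm s G D0 K) {e h : ℝ} (he : 0 < e) (hh : 0 < h) :
    Integrable (fun x : ℝ => x ^ 2) (dm (fun x => h * sS s e x)) := by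
  rw [dm_integrable (H.hmeas_S h e) (H.hnn_S hh e)]
  have := (H.bd_S he).1.const_mul h
  simpa [mul_assoc] using this

lemma hcexpo (H : LP Y Cp Cm s G D0 K) {e h : ℝ} (hh : 0 < h) (u : ℝ) :
    ∫ x, cexpo u x ∂(dm (fun x => h * sS s e x)) = h * ∫ x, cexpo u x ∂(dm (sS s e)) := by
  rw [dm_integral (H.hmeas_S h e) (H.hnn_S hh e), dm_integral (H.meas_S e) (H.nn_S e),
    ← integral_const_mul]
  congr 1
  ext x
  simp only [Complex.real_smul]
  push_cast
  ring

lemma hmass (H : LP Y Cp Cm s G D0 K) {e h : ℝ} (hh : 0 < h) :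
    (dm (fun x => h * sB s e x)).real univ = h * ∫ x, sB s e x := by
  rw [dm_mass (H.hmeas_B h e) (H.hnn_B hh e), integral_const_mul]

lemma hpsi_le (H : LP Y Cp Cm s G D0 K) (b : ℝ) {e h : ℝ} (he : 0 < e) (he1 : e ≤ 1) (hh : 0 < h)
    (ξ : ℝ) {a : ℝ} (ha : |a| = 1 / e) :
    ‖Complex.I * ((h * bS b s e : ℝ) : ℂ) * ((a * ξ : ℝ) : ℂ)
      + ∫ x, cexpo (a * ξ) x ∂(dm (fun x => h * sS s e x))‖
      ≤ CS Y D0 b * (h * e ^ (-Y)) * (1 + ξ ^ 2) := by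
  rw [H.hcexpo hh]
  have h1 := H.psiS_le b he he1 (a * ξ)
  have h2 : (e * (a * ξ)) ^ 2 = ξ ^ 2 := by
    rw [mul_pow, mul_pow, ← sq_abs a, ha]; field_simp
  rw [h2] at h1
  have h3 : Complex.I * ((h * bS b s e : ℝ) : ℂ) * ((a * ξ : ℝ) : ℂ)
      + h * ∫ x, cexpo (a * ξ) x ∂(dm (sS s e)) = h * (Complex.I * bS b s e * ((a * ξ : ℝ) : ℂ)
      + ∫ x, cexpo (a * ξ) x ∂(dm (sS s e))) := by push_cast; ring
  rw [h3, norm_mul, Complex.norm_real, Real.norm_eq_abs, abs_of_pos hh]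
  calc _ ≤ h * ((|b| + 256 * D0 * mI Y + D0 * mI (1 + Y)) * e ^ (-Y) * (1 + ξ ^ 2)) := by gcongr
    _ = _ := by rw [CS]; ring

lemma exists_decomp (H : LP Y Cp Cm s G D0 K) (b : ℝ) {e h : ℝ} (he : 0 < e) (he1 : e ≤ 1)
    (hh : 0 < h) (m : Measure ℝ) [IsProbabilityMeasure m]
    (hm : ∀ u, charFun m u = Complex.exp (h * psiG b s u)) :
    ∃ mB mS : Measure ℝ, IsProbabilityMeasure mB ∧ IsProbabilityMeasure mS ∧ m = mB.conv mS ∧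
      IsSmall b s e h mS ∧ IsCP (dm (fun x => h * sB s e x)) mB := by
  have := dm_finite ((H.bd_B he).1.const_mul h)
  obtain ⟨mB, hB1, hB2, hB3⟩ := exists_cpois (dm (fun x => h * sB s e x))
  obtain ⟨mS, hS1, hS2⟩ := exists_small_law (dm (fun x => h * sS s e x)) (H.hIntg_S he hh)
    (h * bS b s e)
  refine ⟨mB, mS, hB1, hS1, ?_, hS2, hB3⟩
  apply Measure.ext_of_charFun
  ext u
  rw [charFun_conv, hm, hB2, hS2, ← Complex.exp_add, H.psi_decomp b he he1 u, H.hcexpo hh,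
    H.hmass hh]
  congr 1
  have hc : charFun (dm (fun x => h * sB s e x)) u = h * charFun (dm (sB s e)) u := by
    rw [charFun_apply_real, charFun_apply_real, dm_integral (H.hmeas_B h e) (H.hnn_B hh e),
      dm_integral (H.meas_B e) (H.nn_B e), ← integral_const_mul]
    congr 1
    ext x
    simp only [Complex.real_smul]
    push_cast
    ring
  rw [hc, dm_mass (H.meas_B e) (H.nn_B e)]
  push_cast
  ring

lemma small_tail (H : LP Y Cp Cm s G D0 K) (b : ℝ) {γ : ℝ → ℂ} (Hγ : FRep θ2 γ)
    {e h : ℝ} (he : 0 < e) (he1 : e ≤ 1)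
    (hh : 0 < h) (m : Measure ℝ) [IsProbabilityMeasure m] (hm : IsSmall b s e h m) :
    ∫ x, (1 - θ2 (x / e)) ∂m ≤
      (CS Y D0 b * (h * e ^ (-Y))) ^ 2 * ∫ ξ : ℝ, (1 + ξ ^ 2) ^ 2 * ‖γ ξ‖ := by
  have hd : HasDerivAt θ2 0 0 := by
    refine (hasDerivAt_const (0:ℝ) (1:ℝ)).congr_of_eventuallyEq ?_
    exact θ2.eventuallyEq_one
  have hc : Continuous θ2 := θ2.continuous
  have h1 := Hγ.second_order hc hd m _ (H.hIntg_S he hh) (1 / e) (h * bS b s e)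
    (CS Y D0 b * (h * e ^ (-Y))) hm (fun ξ => H.hpsi_le b he he1 hh ξ (by
      rw [abs_of_pos (by positivity)]))
  have h2 : ∫ x, (θ2 (1 / e * x) - θ2 0) ∂(dm (fun x => h * sS s e x)) = 0 := by
    rw [dm_integral (H.hmeas_S h e) (H.hnn_S hh e)]
    rw [integral_eq_zero_of_ae]
    refine ae_of_all _ fun x => ?_
    simp only [sS, smul_eq_mul, Pi.zero_apply]
    have : 1 / e * x = x / e := by ring
    rw [this]
    by_cases hx : 1/8 ≤ |x / e|
    · rw [θ1_zero hx]; ring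
    · rw [θ2_one (le_of_not_ge hx), θ2_one (by simp)]; ring
  rw [h2, θ2_one (by simp)] at h1
  have h3 : ∀ x, 1 / e * x = x / e := fun x => by ring
  simp only [h3] at h1
  have h4 : Integrable (fun x => θ2 (x / e)) m := by
    have := Hγ.integrable_comp hc m (1 / e) 0
    simpa [h3, ← div_eq_inv_mul] using this
  rw [integral_sub (integrable_const _) h4]
  simp only [integral_const, probReal_univ, smul_eq_mul, mul_one]
  have := neg_le_of_abs_le h1
  linarith

lemma small_main (H : LP Y Cp Cm s G D0 K) (b : ℝ) {k : ℕ} (hk : 1 ≤ k) {γ : ℝ → ℂ}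
    (Hγ : FRep (fun v => v ^ (2 * k) * θ2 v) γ)
    {e h : ℝ} (he : 0 < e) (he1 : e ≤ 1)
    (hh : 0 < h) (m : Measure ℝ) [IsProbabilityMeasure m] (hm : IsSmall b s e h m) :
    |∫ x, (x / e) ^ (2 * k) * θ2 (x / e) ∂m - h * ∫ x, (θ1 (x / e) * (x / e) ^ (2 * k)) * s x| ≤
      (CS Y D0 b * (h * e ^ (-Y))) ^ 2 * ∫ ξ : ℝ, (1 + ξ ^ 2) ^ 2 * ‖γ ξ‖ := by
  have hk0 : 2 * k ≠ 0 := by omega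
  have hk1 : 2 * k - 1 ≠ 0 := by omega
  have hd : HasDerivAt (fun v => v ^ (2 * k) * θ2 v) 0 0 := by
    have h1 : HasDerivAt θ2 0 0 := by
      refine (hasDerivAt_const (0:ℝ) (1:ℝ)).congr_of_eventuallyEq ?_
      exact θ2.eventuallyEq_one
    have h2 := (hasDerivAt_pow (2 * k) (0:ℝ)).mul h1
    have h4 : ((2 * k : ℕ) : ℝ) * 0 ^ (2 * k - 1) * θ2 0 + 0 ^ (2 * k) * 0 = 0 := by
      simp [hk1]
    rw [h4] at h2
    exact h2
  have hc : Continuous (fun v => v ^ (2 * k) * θ2 v) := by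
    have := θ2.continuous
    fun_prop
  have h1 := Hγ.second_order hc hd m _ (H.hIntg_S he hh) (1 / e) (h * bS b s e)
    (CS Y D0 b * (h * e ^ (-Y))) hm (fun ξ => H.hpsi_le b he he1 hh ξ (by
      rw [abs_of_pos (by positivity)]))
  have h3 : ∀ x, 1 / e * x = x / e := fun x => by ring
  have h2 : ∫ x, ((1 / e * x) ^ (2 * k) * θ2 (1 / e * x) - 0 ^ (2 * k) * θ2 0)
      ∂(dm (fun x => h * sS s e x)) = h * ∫ x, (θ1 (x / e) * (x / e) ^ (2 * k)) * s x := by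
    rw [dm_integral (H.hmeas_S h e) (H.hnn_S hh e), ← integral_const_mul]
    congr 1
    ext x
    simp only [sS, smul_eq_mul, h3, zero_pow hk0]
    by_cases hx : 1/8 ≤ |x / e|
    · rw [θ1_zero hx]; ring
    · rw [θ2_one (le_of_not_ge hx)]; ring
  rw [h2] at h1
  simpa [h3, hk0, ← div_eq_inv_mul] using h1

end LP

def betaF (Y Cp Cm v : ℝ) : ℝ := (1 - θ1 v) * θ3 v * s0 Y Cp Cm v

lemma s0_pos {Y Cp Cm x : ℝ} (hx : 0 < x) : s0 Y Cp Cm x = Cp * x ^ (-1 - Y) := by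
  simp [s0, levyDensity, hx, abs_of_pos hx]

lemma s0_neg {Y Cp Cm x : ℝ} (hx : x < 0) : s0 Y Cp Cm x = Cm * (-x) ^ (-1 - Y) := by
  simp [s0, levyDensity, hx, abs_of_neg hx, not_lt_of_gt hx]

lemma s0_zero {Y Cp Cm : ℝ} : s0 Y Cp Cm 0 = 0 := by
  simp [s0, levyDensity]

lemma s0_scale {Y Cp Cm e : ℝ} (he : 0 < e) (x : ℝ) :
    s0 Y Cp Cm x = e ^ (-(1 + Y)) * s0 Y Cp Cm (x / e) := by
  have he' : e ^ (-(1 + Y)) ≠ 0 := (Real.rpow_pos_of_pos he _).ne'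
  have h1 : -1 - Y = -(1 + Y) := by ring
  rcases lt_trichotomy x 0 with hx | rfl | hx
  · rw [s0_neg hx, s0_neg (div_neg_of_neg_of_pos hx he), ← neg_div,
      Real.div_rpow (by linarith) he.le, h1]
    field_simp
  · simp [s0_zero]
  · rw [s0_pos hx, s0_pos (div_pos hx he), Real.div_rpow hx.le he.le, h1]
    field_simp

open scoped ContDiff in
lemma beta_contDiff (Y Cp Cm : ℝ) : ContDiff ℝ ∞ (betaF Y Cp Cm) := by
  rw [contDiff_iff_contDiffAt]
  intro x
  have c1 : ContDiffAt ℝ ∞ θ1 x := θ1.contDiffAt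
  have c3 : ContDiffAt ℝ ∞ θ3 x := θ3.contDiffAt
  rcases lt_trichotomy x 0 with hx | rfl | hx
  · have h1 : ContDiffAt ℝ ∞ (fun v => (1 - θ1 v) * θ3 v * (Cm * (-v) ^ (-1 - Y))) x := by
      refine ((contDiffAt_const.sub c1).mul c3).mul (contDiffAt_const.mul ?_)
      exact contDiffAt_id.neg.rpow_const_of_ne (by simpa using hx.ne)
    refine h1.congr_of_eventuallyEq ?_
    filter_upwards [Iio_mem_nhds hx] with v hv
    rw [betaF, s0_neg hv]
  · refine (contDiffAt_const (c := (0:ℝ))).congr_of_eventuallyEq ?_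
    filter_upwards [θ1.eventuallyEq_one] with v hv
    simp [betaF, hv]
  · have h1 : ContDiffAt ℝ ∞ (fun v => (1 - θ1 v) * θ3 v * (Cp * v ^ (-1 - Y))) x := by
      refine ((contDiffAt_const.sub c1).mul c3).mul (contDiffAt_const.mul ?_)
      exact contDiffAt_id.rpow_const_of_ne hx.ne'
    refine h1.congr_of_eventuallyEq ?_
    filter_upwards [Ioi_mem_nhds hx] with v hv
    rw [betaF, s0_pos hv]

lemma beta_support (Y Cp Cm : ℝ) : HasCompactSupport (betaF Y Cp Cm) := by
  have h := θ3.hasCompactSupport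
  unfold betaF
  exact (h.mul_left (f := fun v => 1 - θ1 v)).mul_right

namespace LP
variable {Y Cp Cm : ℝ} {s G : ℝ → ℝ} {D0 K : ℝ}

lemma small_cf (H : LP Y Cp Cm s G D0 K) (b : ℝ)
    {e h : ℝ} (he : 0 < e) (he1 : e ≤ 1)
    (hh : 0 < h) (m : Measure ℝ) [IsProbabilityMeasure m] (hm : IsSmall b s e h m)
    {a : ℝ} (ha : |a| = 1 / e) (ξ : ℝ) :
    ‖charFun m (a * ξ) - 1‖ ≤ CS Y D0 b * (h * e ^ (-Y)) * (1 + ξ ^ 2) := by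
  have h1 := H.hpsi_le b he he1 hh ξ ha
  have h2 := norm_charFun_le_one (μ := m) (t := a * ξ)
  rw [hm] at h2 ⊢
  refine (norm_exp_sub_one_le' ?_).trans h1
  rw [Complex.norm_exp] at h2
  exact Real.exp_le_one_iff.1 h2

lemma big_main (H : LP Y Cp Cm s G D0 K) (b : ℝ) {γ : ℝ → ℂ} (Hγ : FRep (betaF Y Cp Cm) γ)
    {e h M : ℝ} (he : 0 < e) (he1 : e ≤ 1)
    (hh : 0 < h) (m : Measure ℝ) [IsProbabilityMeasure m] (hm : IsSmall b s e h m)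
    {f : ℝ → ℝ} (hf : Measurable f) (hfM : ∀ x, |f x| ≤ M) (hf0 : ∀ x, 2 * e < |x| → f x = 0) :
    |(∫ y, betaF Y Cp Cm (y / e) * ∫ x, f (y + x) ∂m) - ∫ y, f y * betaF Y Cp Cm (y / e)|
      ≤ 4 * e * M * (CS Y D0 b * (h * e ^ (-Y)) * ∫ ξ : ℝ, (1 + ξ ^ 2) ^ 2 * ‖γ ξ‖) := by
  set β := betaF Y Cp Cm with hβ
  have hβc : Continuous β := (beta_contDiff Y Cp Cm).continuous
  have hβi : Integrable (fun y => β (y / e)) :=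
    (hβc.integrable_of_hasCompactSupport (beta_support Y Cp Cm)).comp_div he.ne'
  obtain ⟨B, hB⟩ := hβc.bounded_above_of_compact_support (beta_support Y Cp Cm)
  have hM : 0 ≤ M := (abs_nonneg _).trans (hfM 0)
  have hdomi : Integrable (indicator (Icc (-(2 * e)) (2 * e)) (fun _ => M)) := by
    rw [integrable_indicator_iff measurableSet_Icc]
    exact integrableOn_const (by simp)
  have hfdom : ∀ x, |f x| ≤ indicator (Icc (-(2 * e)) (2 * e)) (fun _ => M) x := by
    intro x
    by_cases hx : |x| ≤ 2 * e
    · rw [indicator_of_mem (show x ∈ Icc _ _ from abs_le.1 hx)]; exact hfM x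
    · rw [hf0 x (not_le.1 hx), abs_zero]; exact indicator_nonneg (fun _ _ => hM) _
  have hfi : Integrable f := hdomi.mono' hf.aestronglyMeasurable (ae_of_all _ hfdom)
  have hfL : ∫ x, |f x| ≤ 4 * e * M := by
    refine (integral_mono hfi.abs hdomi hfdom).trans (le_of_eq ?_)
    rw [integral_indicator measurableSet_Icc]
    simp only [integral_const, smul_eq_mul]
    rw [measureReal_restrict_apply_univ, Real.volume_real_Icc_of_le (by linarith)]
    ring
  have key : ∫ y, β (y / e) * ∫ x, f (y + x) ∂m = ∫ z, f z * ∫ x, β ((z - x) / e) ∂m := by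
    simp_rw [← integral_const_mul]
    rw [integral_integral_swap]
    · have : ∀ x, ∫ y, β (y / e) * f (y + x) = ∫ z, f z * β ((z - x) / e) := by
        intro x
        rw [← integral_add_right_eq_self (fun z => f z * β ((z - x) / e)) x]
        congr 1
        ext y
        rw [add_sub_cancel_right]; ring
      simp_rw [this]
      rw [integral_integral_swap]
      have h1 : Integrable (fun p : ℝ × ℝ => B * |f p.2|) (m.prod volume) :=
        (hfi.abs.const_mul B).comp_snd m
      refine h1.mono' (Measurable.aestronglyMeasurable (by have := hβc.measurable; fun_prop))
        (ae_of_all _ fun p => ?_)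
      simp only [Function.uncurry]
      rw [norm_mul, mul_comm]
      exact mul_le_mul_of_nonneg_right (hB _) (abs_nonneg _)
    · have h1 : Integrable (fun p : ℝ × ℝ => M * |β (p.1 / e)|) (volume.prod m) :=
        (hβi.abs.const_mul M).comp_fst m
      refine h1.mono' (Measurable.aestronglyMeasurable (by have := hβc.measurable; fun_prop))
        (ae_of_all _ fun p => ?_)
      simp only [Function.uncurry]
      rw [norm_mul, mul_comm]
      exact mul_le_mul_of_nonneg_right (hfM _) (abs_nonneg _)
  rw [key]
  have hpt : ∀ z, |∫ x, β ((z - x) / e) ∂m - β (z / e)|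
      ≤ CS Y D0 b * (h * e ^ (-Y)) * ∫ ξ : ℝ, (1 + ξ ^ 2) ^ 2 * ‖γ ξ‖ := by
    intro z
    have := Hγ.first_order m (-(1 / e)) (z / e) (CS Y D0 b * (h * e ^ (-Y)))
      (fun ξ => H.small_cf b he he1 hh m hm (by rw [abs_neg, abs_of_pos (by positivity)]) ξ)
    have h2 : ∀ x, -(1 / e) * x + z / e = (z - x) / e := fun x => by ring
    simpa only [h2] using this
  set Q := CS Y D0 b * (h * e ^ (-Y)) * ∫ ξ : ℝ, (1 + ξ ^ 2) ^ 2 * ‖γ ξ‖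
  have hm1 : Measurable (fun z => ∫ x, β ((z - x) / e) ∂m) := by
    have : StronglyMeasurable (fun p : ℝ × ℝ => β ((p.1 - p.2) / e)) :=
      Continuous.stronglyMeasurable (by fun_prop)
    exact this.integral_prod_right'.measurable
  have i1 : Integrable (fun z => f z * ∫ x, β ((z - x) / e) ∂m) := by
    refine (hfi.abs.mul_const B).mono' (Measurable.aestronglyMeasurable (by have := hβc.measurable; fun_prop))
      (ae_of_all _ fun z => ?_)
    rw [norm_mul]
    refine mul_le_mul_of_nonneg_left ?_ (abs_nonneg _)
    refine (norm_integral_le_of_norm_le_const (ae_of_all _ fun x => hB _)).trans (le_of_eq ?_)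
    simp
  have i2 : Integrable (fun z => f z * β (z / e)) := by
    refine (hfi.abs.mul_const B).mono' (Measurable.aestronglyMeasurable (by have := hβc.measurable; fun_prop))
      (ae_of_all _ fun z => ?_)
    rw [norm_mul]
    exact mul_le_mul_of_nonneg_left (hB _) (abs_nonneg _)
  rw [← integral_sub i1 i2]
  have hQ : 0 ≤ Q := (abs_nonneg _).trans (hpt 0)
  calc |∫ z, (f z * ∫ x, β ((z - x) / e) ∂m) - f z * β (z / e)|
      ≤ ∫ z, |f z| * Q := by
        refine abs_integral_le_integral_abs.trans (integral_mono (i1.sub i2).abs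
          (hfi.abs.mul_const Q) fun z => ?_)
        simp only
        rw [← mul_sub, abs_mul]
        exact mul_le_mul_of_nonneg_left (hpt z) (abs_nonneg _)
    _ = (∫ z, |f z|) * Q := integral_mul_const _ _
    _ ≤ _ := by gcongr

end LP

namespace LP
variable {Y Cp Cm : ℝ} {s G : ℝ → ℝ} {D0 K : ℝ}

lemma lp0 (H : LP Y Cp Cm s G D0 K) : LP Y Cp Cm (s0 Y Cp Cm) (fun _ => 0) D0 0 where
  hY1 := H.hY1
  hY2 := H.hY2
  hCp := H.hCp
  hCm := H.hCm
  meas := measurable_s0 _ _ _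
  nonneg := s0_nonneg H.hCp H.hCm
  le := H.le0
  le0 := H.le0
  hD0 := H.hD0
  hK := le_rfl
  Gint := integrable_zero _ _ _
  Gnn := fun _ => le_rfl
  diff := fun x => by simp

lemma CS_nonneg (H : LP Y Cp Cm s G D0 K) (b : ℝ) : 0 ≤ CS Y D0 b := by
  have := H.hD0
  have := mI_nonneg Y
  have := mI_nonneg (1 + Y)
  unfold CS; positivity

lemma θpow_le {k : ℕ} (hk : 1 ≤ k) (v : ℝ) : θ1 v * v ^ (2 * k) ≤ θ1 v * v ^ 2 := by
  by_cases h : 1/8 ≤ |v|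
  · rw [θ1_zero h]; simp
  · push Not at h
    refine mul_le_mul_of_nonneg_left ?_ θ1.nonneg
    rw [pow_mul]
    have h2 : v ^ 2 ≤ 1 := by rw [← sq_abs]; nlinarith [abs_nonneg v]
    calc (v ^ 2) ^ k ≤ (v ^ 2) ^ 1 := pow_le_pow_of_le_one (sq_nonneg v) h2 hk
      _ = v ^ 2 := pow_one _

lemma I1_le (H : LP Y Cp Cm s G D0 K) {k : ℕ} (hk : 1 ≤ k) {e : ℝ} (he : 0 < e) :
    Integrable (fun x => (θ1 (x / e) * (x / e) ^ (2 * k)) * s x) ∧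
    |∫ x, (θ1 (x / e) * (x / e) ^ (2 * k)) * s x| ≤ D0 * mI (1 + Y) * e ^ (-Y) := by
  have h1 := H.hY1
  have h2 := H.hY2
  have hc := θ1.continuous.measurable
  have hs := H.meas
  have := bound_mw (a := 1 + Y) (K := D0) (F := fun x => (θ1 (x / e) * (x / e) ^ (2 * k)) * s x)
    (by linarith) (by linarith) he
    (Measurable.aestronglyMeasurable (by fun_prop)) (fun x => by
      have e1 : 0 ≤ θ1 (x / e) * (x / e) ^ (2 * k) :=
        mul_nonneg θ1.nonneg (by rw [pow_mul]; positivity)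
      have e2 := (θpow_le hk (x / e)).trans (θ1_sq_le (x / e))
      rw [abs_of_nonneg (mul_nonneg e1 (H.nonneg x))]
      calc _ ≤ mw (x / e) * (D0 * |x| ^ (-(1 + Y))) :=
            mul_le_mul e2 (H.le x) (H.nonneg x) (mw_nonneg _)
        _ = _ := by ring)
  refine ⟨this.1, abs_integral_le_integral_abs.trans (this.2.trans (le_of_eq ?_))⟩
  rw [show (1 - (1 + Y)) = -Y by ring]

lemma I1_diff (H : LP Y Cp Cm s G D0 K) {k : ℕ} (hk : 1 ≤ k) {e : ℝ} (he : 0 < e) (he1 : e ≤ 1) :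
    |(∫ x, (θ1 (x / e) * (x / e) ^ (2 * k)) * s x) -
      ∫ x, (θ1 (x / e) * (x / e) ^ (2 * k)) * s0 Y Cp Cm x|
      ≤ ((∫ x, G x) + K * mI Y) * e ^ (1 - Y) := by
  have hc := θ1.continuous.measurable
  rw [← integral_sub (H.I1_le hk he).1 (H.lp0.I1_le hk he).1]
  have := H.bd_diff (A := 1) he he1 (φ := fun x => θ1 (x / e) * (x / e) ^ (2 * k))
    (by fun_prop) (fun x => by
      rw [abs_of_nonneg (mul_nonneg θ1.nonneg (by rw [pow_mul]; positivity)), one_mul]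
      exact (θpow_le hk (x / e)).trans (θ1_sq_le (x / e)))
  simp_rw [← mul_sub]
  refine abs_integral_le_integral_abs.trans (this.2.trans (le_of_eq (by ring)))

lemma F0_est (H : LP Y Cp Cm s G D0 K) (b : ℝ) {k : ℕ} (hk : 1 ≤ k) {γ1 γ2 : ℝ → ℂ}
    (Hγ1 : FRep (fun v => v ^ (2 * k) * θ2 v) γ1) (Hγ2 : FRep θ2 γ2)
    {e h M : ℝ} (he : 0 < e) (he1 : e ≤ 1)
    (hh : 0 < h) (m : Measure ℝ) [IsProbabilityMeasure m] (hm : IsSmall b s e h m)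
    {f : ℝ → ℝ} (hf : Measurable f) (hfM : ∀ x, |f x| ≤ M)
    (hf1 : ∀ x, |x| ≤ e / 2 → f x = (x / e) ^ (2 * k)) :
    |∫ x, f x ∂m - h * ∫ x, (θ1 (x / e) * (x / e) ^ (2 * k)) * s x| ≤
      (CS Y D0 b * (h * e ^ (-Y))) ^ 2 * ((∫ ξ : ℝ, (1 + ξ ^ 2) ^ 2 * ‖γ1 ξ‖)
        + M * ∫ ξ : ℝ, (1 + ξ ^ 2) ^ 2 * ‖γ2 ξ‖) := by
  have hM : 0 ≤ M := (abs_nonneg _).trans (hfM 0)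
  have hc := θ2.continuous
  have hcm := hc.measurable
  have t := H.small_tail b Hγ2 he he1 hh m hm
  have t1 := H.small_main b hk Hγ1 he he1 hh m hm
  have hpt : ∀ x, f x = (x / e) ^ (2 * k) * θ2 (x / e) + f x * (1 - θ2 (x / e)) := by
    intro x
    by_cases hx : 1/4 ≤ |x / e|
    · rw [θ2_zero hx]; ring
    · push Not at hx
      rw [abs_div, abs_of_pos he, div_lt_iff₀ he] at hx
      rw [hf1 x (by linarith)]; ring
  have hg : Continuous (fun v => v ^ (2 * k) * θ2 v) := by fun_prop
  have i1 : Integrable (fun x => (x / e) ^ (2 * k) * θ2 (x / e)) m := by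
    have := Hγ1.integrable_comp hg m (1 / e) 0
    have h3 : ∀ x, 1 / e * x + 0 = x / e := fun x => by ring
    simpa only [h3] using this
  have i2 : Integrable (fun x => 1 - θ2 (x / e)) m := by
    have := Hγ2.integrable_comp hc m (1 / e) 0
    have h3 : ∀ x, 1 / e * x + 0 = x / e := fun x => by ring
    simp only [h3] at this
    exact (integrable_const _).sub this
  have hb : ∀ x, |f x * (1 - θ2 (x / e))| ≤ M * (1 - θ2 (x / e)) := by
    intro x
    have : 0 ≤ 1 - θ2 (x / e) := sub_nonneg.2 θ2.le_one
    rw [abs_mul, abs_of_nonneg this]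
    exact mul_le_mul_of_nonneg_right (hfM x) this
  have i3 : Integrable (fun x => f x * (1 - θ2 (x / e))) m :=
    (i2.const_mul M).mono' (Measurable.aestronglyMeasurable (by fun_prop)) (ae_of_all _ hb)
  have e1 : ∫ x, f x ∂m = ∫ x, (x / e) ^ (2 * k) * θ2 (x / e) ∂m
      + ∫ x, f x * (1 - θ2 (x / e)) ∂m := by
    rw [← integral_add i1 i3]
    exact integral_congr_ae (ae_of_all _ hpt)
  have e2 : |∫ x, f x * (1 - θ2 (x / e)) ∂m| ≤ M * ((CS Y D0 b * (h * e ^ (-Y))) ^ 2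
      * ∫ ξ : ℝ, (1 + ξ ^ 2) ^ 2 * ‖γ2 ξ‖) := by
    refine abs_integral_le_integral_abs.trans ((integral_mono i3.abs (i2.const_mul M) hb).trans ?_)
    rw [integral_const_mul]
    exact mul_le_mul_of_nonneg_left t hM
  rw [e1]
  calc _ = |(∫ x, (x / e) ^ (2 * k) * θ2 (x / e) ∂m
          - h * ∫ x, (θ1 (x / e) * (x / e) ^ (2 * k)) * s x)
          + ∫ x, f x * (1 - θ2 (x / e)) ∂m| := by congr 1; ring
    _ ≤ _ := (abs_add_le _ _).trans (add_le_add t1 e2)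
    _ = _ := by ring

lemma big_est (H : LP Y Cp Cm s G D0 K) (b : ℝ) {γ2 γ3 : ℝ → ℂ}
    (Hγ2 : FRep θ2 γ2) (Hγ3 : FRep (betaF Y Cp Cm) γ3)
    {e h M : ℝ} (he : 0 < e) (he1 : e ≤ 1)
    (hh : 0 < h) (hL : h * e ^ (-Y) ≤ 1)
    (m : Measure ℝ) [IsProbabilityMeasure m] (hm : IsSmall b s e h m)
    {f : ℝ → ℝ} (hf : Measurable f) (hfM : ∀ x, |f x| ≤ M) (hf0 : ∀ x, 2 * e < |x| → f x = 0) :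
    |(h * ∫ y, sB s e y * ∫ x, f (y + x) ∂m)
        - h * ∫ y, f y * ((1 - θ1 (y / e)) * θ3 (y / e) * s0 Y Cp Cm y)| ≤
      (256 * M * ((∫ x, G x) + K * mI Y)) * (h * e ^ (1 - Y)) +
      (256 * D0 * mI (1 + Y) * M * CS Y D0 b ^ 2 * (∫ ξ : ℝ, (1 + ξ ^ 2) ^ 2 * ‖γ2 ξ‖)
       + 4 * M * CS Y D0 b * ∫ ξ : ℝ, (1 + ξ ^ 2) ^ 2 * ‖γ3 ξ‖) * (h * e ^ (-Y)) ^ 2 := by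
  have hM : 0 ≤ M := (abs_nonneg _).trans (hfM 0)
  have hD := H.hD0
  have hmI := mI_nonneg (1 + Y)
  have hCS := H.CS_nonneg b
  have hc1 := θ1.continuous.measurable
  have hc3 := θ3.continuous.measurable
  have hs := H.meas
  have hs0 := measurable_s0 Y Cp Cm
  have hp : 0 < e ^ (-Y) := Real.rpow_pos_of_pos he _
  have H0 := H.lp0
  set I2 := ∫ ξ : ℝ, (1 + ξ ^ 2) ^ 2 * ‖γ2 ξ‖ with hI2
  set I3 := ∫ ξ : ℝ, (1 + ξ ^ 2) ^ 2 * ‖γ3 ξ‖ with hI3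
  have hI2n : 0 ≤ I2 := integral_nonneg fun ξ => by positivity
  have t := H.small_tail b Hγ2 he he1 hh m hm
  rw [← hI2] at t
  have bm := H.big_main b Hγ3 he he1 hh m hm hf hfM hf0
  rw [← hI3] at bm
  set F : ℝ → ℝ := fun y => ∫ x, f (y + x) ∂m with hF
  have hFm : Measurable F := by
    have : StronglyMeasurable (fun p : ℝ × ℝ => f (p.1 + p.2)) :=
      Measurable.stronglyMeasurable (by fun_prop)
    exact this.integral_prod_right'.measurable
  have hFM : ∀ y, |F y| ≤ M := by
    intro y
    have := norm_integral_le_of_norm_le_const (μ := m) (f := fun x => f (y + x)) (C := M)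
      (ae_of_all _ fun x => hfM _)
    simpa using this
  have i2 : Integrable (fun x => 1 - θ2 (x / e)) m := by
    have := Hγ2.integrable_comp θ2.continuous m (1 / e) 0
    have h3 : ∀ x, 1 / e * x + 0 = x / e := fun x => by ring
    simp only [h3] at this
    exact (integrable_const _).sub this
  set τ := (CS Y D0 b * (h * e ^ (-Y))) ^ 2 * I2 with hτ
  have hFfar : ∀ y, 4 * e ≤ |y| → |F y| ≤ M * τ := by
    intro y hy
    have hb : ∀ x, |f (y + x)| ≤ M * (1 - θ2 (x / e)) := by
      intro x
      have h0 : 0 ≤ 1 - θ2 (x / e) := sub_nonneg.2 θ2.le_one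
      by_cases hx : 2 * e < |y + x|
      · rw [hf0 _ hx, abs_zero]; positivity
      · have h4 : |y| ≤ |y + x| + |x| := by
          have := abs_sub (y + x) x
          simpa using this
        rw [θ2_zero (by rw [abs_div, abs_of_pos he, le_div_iff₀ he]; linarith)]
        simpa using hfM _
    have i1 : Integrable (fun x => f (y + x)) m :=
      (i2.const_mul M).mono' (Measurable.aestronglyMeasurable (by fun_prop)) (ae_of_all _ hb)
    refine abs_integral_le_integral_abs.trans ((integral_mono i1.abs (i2.const_mul M) hb).trans ?_)
    rw [integral_const_mul]
    exact mul_le_mul_of_nonneg_left t hM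
  -- three pieces
  have d1 := H.bd_diff (A := 256 * M) he he1 (φ := fun y => (1 - θ1 (y / e)) * F y)
    (by fun_prop) (fun x => by
      rw [abs_mul, abs_of_nonneg (one_sub_θ1_nonneg _)]
      calc _ ≤ (256 * mw (x / e)) * M := mul_le_mul (one_sub_θ1_le _) (hFM x) (abs_nonneg _)
            (by have := mw_nonneg (x / e); positivity)
        _ = _ := by ring)
  have hB0 := H0.bd_B he
  have p2b : ∀ y, |(1 - θ1 (y / e)) * (1 - θ3 (y / e)) * s0 Y Cp Cm y * F y|
      ≤ (M * τ) * sB (s0 Y Cp Cm) e y := by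
    intro y
    have a1 := one_sub_θ1_nonneg (y / e)
    have a3 : 0 ≤ 1 - θ3 (y / e) := sub_nonneg.2 θ3.le_one
    have a4 : 1 - θ3 (y / e) ≤ 1 := by have := θ3.nonneg (x := y / e); linarith
    have a5 := H0.nonneg y
    have hτ0 : 0 ≤ τ := by positivity
    by_cases hy : |y / e| ≤ 4
    · rw [θ3_one hy]
      simp only [sub_self, mul_zero, zero_mul, abs_zero]
      have := H0.nn_B e y
      positivity
    · push Not at hy
      rw [abs_div, abs_of_pos he, lt_div_iff₀ he] at hy
      rw [abs_mul, abs_of_nonneg (by positivity), sB, mul_comm (M * τ)]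
      refine mul_le_mul ?_ (hFfar y hy.le) (abs_nonneg _) (by positivity)
      refine mul_le_mul_of_nonneg_right ?_ a5
      nlinarith
  have i2' : Integrable (fun y => (1 - θ1 (y / e)) * (1 - θ3 (y / e)) * s0 Y Cp Cm y * F y) :=
    (hB0.1.const_mul (M * τ)).mono' (Measurable.aestronglyMeasurable (by fun_prop))
      (ae_of_all _ p2b)
  have b2 : |∫ y, (1 - θ1 (y / e)) * (1 - θ3 (y / e)) * s0 Y Cp Cm y * F y|
      ≤ (M * τ) * (256 * D0 * mI (1 + Y) * e ^ (-Y)) := by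
    refine abs_integral_le_integral_abs.trans ((integral_mono i2'.abs
      (hB0.1.const_mul (M * τ)) p2b).trans ?_)
    rw [integral_const_mul]
    exact mul_le_mul_of_nonneg_left hB0.2 (by positivity)
  have hsc : ∀ y, (1 - θ1 (y / e)) * θ3 (y / e) * s0 Y Cp Cm y
      = e ^ (-(1 + Y)) * betaF Y Cp Cm (y / e) := by
    intro y
    rw [s0_scale he y, betaF]; ring
  have hβc : Continuous (betaF Y Cp Cm) := (beta_contDiff Y Cp Cm).continuous
  have hβi : Integrable (fun y => betaF Y Cp Cm (y / e)) :=
    (hβc.integrable_of_hasCompactSupport (beta_support Y Cp Cm)).comp_div he.ne'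
  have i3 : Integrable (fun y => betaF Y Cp Cm (y / e) * F y) :=
    hβi.mul_bdd hFm.aestronglyMeasurable (ae_of_all _ hFM)
  have hsplit : ∫ y, sB s e y * F y = (∫ y, (1 - θ1 (y / e)) * F y * (s y - s0 Y Cp Cm y))
      + (∫ y, (1 - θ1 (y / e)) * (1 - θ3 (y / e)) * s0 Y Cp Cm y * F y)
      + e ^ (-(1 + Y)) * ∫ y, betaF Y Cp Cm (y / e) * F y := by
    have i12 : Integrable (fun y => (1 - θ1 (y / e)) * F y * (s y - s0 Y Cp Cm y)
      + (1 - θ1 (y / e)) * (1 - θ3 (y / e)) * s0 Y Cp Cm y * F y) := d1.1.add i2'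
    rw [← integral_const_mul, ← integral_add d1.1 i2', ← integral_add i12 (i3.const_mul _)]
    congr 1
    ext y
    rw [← mul_assoc, ← hsc, sB]
    ring
  have hfb : ∫ y, f y * ((1 - θ1 (y / e)) * θ3 (y / e) * s0 Y Cp Cm y)
      = e ^ (-(1 + Y)) * ∫ y, f y * betaF Y Cp Cm (y / e) := by
    rw [← integral_const_mul]
    congr 1
    ext y
    rw [hsc]; ring
  rw [hfb, hsplit]
  have hee : e ^ (-(1 + Y)) * e = e ^ (-Y) := by
    rw [show -Y = -(1 + Y) + 1 by ring, Real.rpow_add he, Real.rpow_one]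
  set L := h * e ^ (-Y) with hLdef
  have hL0 : 0 ≤ L := by positivity
  have hq : 0 < e ^ (-(1 + Y)) := Real.rpow_pos_of_pos he _
  have b1 := (abs_integral_le_integral_abs).trans d1.2
  set J1 := ∫ y, (1 - θ1 (y / e)) * F y * (s y - s0 Y Cp Cm y)
  set J2 := ∫ y, (1 - θ1 (y / e)) * (1 - θ3 (y / e)) * s0 Y Cp Cm y * F y
  set J3 := ∫ y, betaF Y Cp Cm (y / e) * F y
  set J4 := ∫ y, f y * betaF Y Cp Cm (y / e)
  calc |h * (J1 + J2 + e ^ (-(1 + Y)) * J3) - h * (e ^ (-(1 + Y)) * J4)|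
      = |h * J1 + h * J2 + h * e ^ (-(1 + Y)) * (J3 - J4)| := by congr 1; ring
    _ ≤ h * |J1| + h * |J2| + h * e ^ (-(1 + Y)) * |J3 - J4| := by
        refine (abs_add_three _ _ _).trans (le_of_eq ?_)
        rw [abs_mul, abs_mul, abs_mul, abs_of_pos hh, abs_of_pos (mul_pos hh hq)]
    _ ≤ h * (256 * M * ((∫ x, G x) + K * mI Y) * e ^ (1 - Y))
        + h * ((M * τ) * (256 * D0 * mI (1 + Y) * e ^ (-Y)))
        + h * e ^ (-(1 + Y)) * (4 * e * M * (CS Y D0 b * L * I3)) := by gcongr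
    _ = (256 * M * ((∫ x, G x) + K * mI Y)) * (h * e ^ (1 - Y))
        + 256 * D0 * mI (1 + Y) * M * CS Y D0 b ^ 2 * I2 * (L ^ 2 * L)
        + 4 * M * CS Y D0 b * I3 * (h * (e ^ (-(1 + Y)) * e)) * L := by
          rw [hτ, hLdef]; ring
    _ ≤ (256 * M * ((∫ x, G x) + K * mI Y)) * (h * e ^ (1 - Y))
        + 256 * D0 * mI (1 + Y) * M * CS Y D0 b ^ 2 * I2 * (L ^ 2 * 1)
        + 4 * M * CS Y D0 b * I3 * (h * (e ^ (-(1 + Y)) * e)) * L := by gcongr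
    _ = _ := by rw [hee, hLdef]; ring

end LP

open scoped ContDiff in
lemma exists_frep_θ2 : ∃ γ, FRep θ2 γ :=
  exists_frep θ2 θ2.hasCompactSupport θ2.contDiff

open scoped ContDiff in
lemma exists_frep_pow (k : ℕ) (θ : ContDiffBump (0:ℝ)) :
    ∃ γ, FRep (fun v => v ^ (2 * k) * θ v) γ :=
  exists_frep _ (θ.hasCompactSupport.mul_left) ((contDiff_id.pow _).mul θ.contDiff)

namespace LP
variable {Y Cp Cm : ℝ} {s G : ℝ → ℝ} {D0 K : ℝ}

set_option maxHeartbeats 1000000 in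
lemma core (H : LP Y Cp Cm s G D0 K) (b : ℝ) {k : ℕ} (hk : 1 ≤ k) (M : ℝ) (hM : 0 ≤ M) :
    ∃ C : ℝ, 0 ≤ C ∧ ∀ e h : ℝ, 0 < e → e ≤ 1 → 0 < h → h * e ^ (-Y) ≤ 1 →
      ∀ (m : Measure ℝ) [IsProbabilityMeasure m],
      (∀ u, charFun m u = Complex.exp (h * psiG b s u)) →
      ∀ f : ℝ → ℝ, Measurable f → (∀ x, |f x| ≤ M) →
      (∀ x, |x| ≤ e / 2 → f x = (x / e) ^ (2 * k)) → (∀ x, 2 * e < |x| → f x = 0) →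
      |∫ x, f x ∂m - h * ∫ x, f x * s0 Y Cp Cm x| ≤ C * ((h * e ^ (-Y)) ^ 2 + h * e ^ (1 - Y)) := by
  obtain ⟨γ1, Hγ1⟩ := exists_frep_pow k θ2
  obtain ⟨γ2, Hγ2⟩ := exists_frep_θ2
  obtain ⟨γ3, Hγ3⟩ := exists_frep _ (beta_support Y Cp Cm) (beta_contDiff Y Cp Cm)
  set I1 := ∫ ξ : ℝ, (1 + ξ ^ 2) ^ 2 * ‖γ1 ξ‖ with hI1
  set I2 := ∫ ξ : ℝ, (1 + ξ ^ 2) ^ 2 * ‖γ2 ξ‖ with hI2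
  set I3 := ∫ ξ : ℝ, (1 + ξ ^ 2) ^ 2 * ‖γ3 ξ‖ with hI3
  have hI1n : 0 ≤ I1 := integral_nonneg fun ξ => by positivity
  have hI2n : 0 ≤ I2 := integral_nonneg fun ξ => by positivity
  have hI3n : 0 ≤ I3 := integral_nonneg fun ξ => by positivity
  have hD := H.hD0
  have hKn := H.hK
  have hmI := mI_nonneg (1 + Y)
  have hmY := mI_nonneg Y
  have hCS := H.CS_nonneg b
  set CG := (∫ x, G x) + K * mI Y with hCG
  have hCGn : 0 ≤ CG := by
    have : 0 ≤ ∫ x, G x := integral_nonneg H.Gnn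
    positivity
  set Λ := 256 * D0 * mI (1 + Y) with hΛ
  set E1 := CS Y D0 b ^ 2 * (I1 + M * I2) with hE1
  set E2 := Λ * M * CS Y D0 b ^ 2 * I2 + 4 * M * CS Y D0 b * I3 with hE2
  have hΛn : 0 ≤ Λ := by positivity
  have hE1n : 0 ≤ E1 := by positivity
  have hE2n : 0 ≤ E2 := by positivity
  refine ⟨3 * M * Λ ^ 2 + Λ * (D0 * mI (1 + Y) + E1) + E1 + E2 + CG + 256 * M * CG,
    by positivity, ?_⟩
  intro e h he he1 hh hL m _ hm f hf hfM hf1 hf0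
  obtain ⟨mB, mS, hB1, hS1, hconv, hS, hCP⟩ := H.exists_decomp b he he1 hh m hm
  have hp : 0 < e ^ (-Y) := Real.rpow_pos_of_pos he _
  set F : ℝ → ℝ := fun y => ∫ x, f (y + x) ∂mS with hF
  have hFm : Measurable F := by
    have : StronglyMeasurable (fun p : ℝ × ℝ => f (p.1 + p.2)) :=
      Measurable.stronglyMeasurable (by fun_prop)
    exact this.integral_prod_right'.measurable
  have hFM : ∀ y, |F y| ≤ M := by
    intro y
    have := norm_integral_le_of_norm_le_const (μ := mS) (f := fun x => f (y + x)) (C := M)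
      (ae_of_all _ fun x => hfM _)
    simpa using this
  have hfint : ∫ x, f x ∂m = ∫ y, F y ∂mB := by
    rw [hconv, integral_conv]
    refine (integrable_const M).mono' hf.aestronglyMeasurable (ae_of_all _ hfM)
  have c1 := hCP F M hFm hFM
  have c2 := H.F0_est b hk Hγ1 Hγ2 he he1 hh mS hS hf hfM hf1
  have c3 := H.big_est b Hγ2 Hγ3 he he1 hh hL mS hS hf hfM hf0
  have c4 := (H.I1_le hk he).2
  have c5 := H.I1_diff hk he he1
  rw [← hI1, ← hI2] at c2
  rw [← hI2, ← hI3, ← hΛ, ← hE2, ← hCG] at c3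
  rw [← hCG] at c5
  have hF0 : F 0 = ∫ x, f x ∂mS := by simp [hF]
  rw [← hF0] at c2
  have hA : ∫ x, F x ∂(dm fun x => h * sB s e x) = h * ∫ y, sB s e y * F y := by
    rw [dm_integral (H.hmeas_B h e) (H.hnn_B hh e), ← integral_const_mul]
    congr 1
    ext y
    simp only [smul_eq_mul]; ring
  have hlam : (dm fun x => h * sB s e x).real univ ≤ Λ * (h * e ^ (-Y)) := by
    rw [H.hmass hh]
    calc _ ≤ h * (256 * D0 * mI (1 + Y) * e ^ (-Y)) := by
          exact mul_le_mul_of_nonneg_left (H.bd_B he).2 hh.le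
      _ = _ := by rw [hΛ]; ring
  set lam := (dm fun x => h * sB s e x).real univ
  have hlam0 : 0 ≤ lam := measureReal_nonneg
  rw [hA] at c1
  set L := h * e ^ (-Y) with hLd
  have hL0 : 0 ≤ L := by positivity
  set N := h * e ^ (1 - Y) with hNd
  have hN0 : 0 ≤ N := mul_nonneg hh.le (Real.rpow_nonneg he.le _)
  -- identity for the main term
  have hmain : ∫ x, f x * s0 Y Cp Cm x = (∫ x, (θ1 (x / e) * (x / e) ^ (2 * k)) * s0 Y Cp Cm x)
      + ∫ y, f y * ((1 - θ1 (y / e)) * θ3 (y / e) * s0 Y Cp Cm y) := by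
    have i1 := (H.lp0.I1_le hk he).1
    have i2 : Integrable (fun y => f y * ((1 - θ1 (y / e)) * θ3 (y / e) * s0 Y Cp Cm y)) := by
      have hc1 := θ1.continuous.measurable
      have hc3 := θ3.continuous.measurable
      have hs0 := measurable_s0 Y Cp Cm
      refine ((H.lp0.bd_B he).1.const_mul M).mono' (Measurable.aestronglyMeasurable (by fun_prop))
        (ae_of_all _ fun y => ?_)
      have a1 := one_sub_θ1_nonneg (y / e)
      have a3 : 0 ≤ θ3 (y / e) := θ3.nonneg
      have a4 : θ3 (y / e) ≤ 1 := θ3.le_one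
      have a5 := H.lp0.nonneg y
      rw [Real.norm_eq_abs, abs_mul, abs_of_nonneg (a := _ * _ * _) (by positivity), sB]
      refine mul_le_mul (hfM y) ?_ (by positivity) hM
      refine mul_le_mul_of_nonneg_right ?_ a5
      nlinarith
    rw [← integral_add i1 i2]
    congr 1
    ext x
    by_cases hx : 2 * e < |x|
    · rw [hf0 x hx, θ1_zero (by rw [abs_div, abs_of_pos he, le_div_iff₀ he]; linarith)]
      ring
    · rw [θ3_one (by rw [abs_div, abs_of_pos he, div_le_iff₀ he]; linarith)]
      by_cases hx2 : |x| ≤ e / 2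
      · rw [hf1 x hx2]; ring
      · rw [θ1_zero (by rw [abs_div, abs_of_pos he, le_div_iff₀ he]; linarith)]
        ring
  rw [hfint, hmain]
  set P1 := ∫ x, (θ1 (x / e) * (x / e) ^ (2 * k)) * s x
  set P0 := ∫ x, (θ1 (x / e) * (x / e) ^ (2 * k)) * s0 Y Cp Cm x
  set Q0 := ∫ y, f y * ((1 - θ1 (y / e)) * θ3 (y / e) * s0 Y Cp Cm y)
  set Q1 := ∫ y, sB s e y * F y
  have c2' : |F 0 - h * P1| ≤ E1 * L ^ 2 := c2.trans (le_of_eq (by rw [hE1]; ring))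
  have c4' : |h * P1| ≤ D0 * mI (1 + Y) * L := by
    rw [abs_mul, abs_of_pos hh]
    calc _ ≤ h * (D0 * mI (1 + Y) * e ^ (-Y)) := mul_le_mul_of_nonneg_left c4 hh.le
      _ = _ := by rw [hLd]; ring
  have c5' : |h * P1 - h * P0| ≤ CG * N := by
    rw [← mul_sub, abs_mul, abs_of_pos hh]
    calc _ ≤ h * (CG * e ^ (1 - Y)) := mul_le_mul_of_nonneg_left c5 hh.le
      _ = _ := by rw [hNd]; ring
  have hF0' : |F 0| ≤ (D0 * mI (1 + Y) + E1) * L := by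
    have : |F 0| ≤ |F 0 - h * P1| + |h * P1| := by
      have := abs_add_le (F 0 - h * P1) (h * P1)
      simpa using this
    have h7 : L ^ 2 ≤ L := by
      rw [sq]; exact mul_le_of_le_one_right hL0 hL
    have h8 : E1 * L ^ 2 ≤ E1 * L := mul_le_mul_of_nonneg_left h7 hE1n
    linarith
  have c6 : |lam * F 0| ≤ Λ * (D0 * mI (1 + Y) + E1) * L ^ 2 := by
    rw [abs_mul, abs_of_nonneg hlam0]
    calc _ ≤ (Λ * L) * ((D0 * mI (1 + Y) + E1) * L) :=
          mul_le_mul hlam hF0' (abs_nonneg _) (by positivity)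
      _ = _ := by ring
  have c1' : |∫ y, F y ∂mB - (1 - lam) * F 0 - h * Q1| ≤ 3 * M * Λ ^ 2 * L ^ 2 := by
    refine c1.trans ?_
    calc 3 * M * lam ^ 2 ≤ 3 * M * (Λ * L) ^ 2 := by gcongr
      _ = _ := by ring
  have tri : |∫ y, F y ∂mB - h * (P0 + Q0)| ≤ |∫ y, F y ∂mB - (1 - lam) * F 0 - h * Q1|
      + |lam * F 0| + |F 0 - h * P1| + |h * P1 - h * P0| + |h * Q1 - h * Q0| := by
    have : ∫ y, F y ∂mB - h * (P0 + Q0) = (∫ y, F y ∂mB - (1 - lam) * F 0 - h * Q1)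
      + (-(lam * F 0)) + (F 0 - h * P1) + (h * P1 - h * P0) + (h * Q1 - h * Q0) := by ring
    rw [this, ← abs_neg (lam * F 0)]
    refine (abs_add_le _ _).trans (add_le_add_left ?_ _)
    refine (abs_add_le _ _).trans (add_le_add_left ?_ _)
    exact abs_add_three _ _ _
  refine tri.trans ?_
  have hL2 : 0 ≤ L ^ 2 := sq_nonneg L
  calc _ ≤ 3 * M * Λ ^ 2 * L ^ 2 + Λ * (D0 * mI (1 + Y) + E1) * L ^ 2 + E1 * L ^ 2 + CG * N
        + ((256 * M * CG) * N + E2 * L ^ 2) := by gcongr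
    _ ≤ _ := by
      have x1 : 0 ≤ 3 * M * Λ ^ 2 + Λ * (D0 * mI (1 + Y) + E1) + E1 + E2 := by positivity
      have x2 : 0 ≤ CG + 256 * M * CG := by positivity
      have x3 := mul_nonneg x1 hN0
      have x4 := mul_nonneg x2 hL2
      linarith

end LP

def θ4 : ContDiffBump (0 : ℝ) := ⟨1, 2, by norm_num, by norm_num⟩
lemma θ4_one {v : ℝ} (h : |v| ≤ 1) : θ4 v = 1 :=
  θ4.one_of_mem_closedBall (by simpa [θ4] using h)

/-- indicator of `[-e,e]` -/
def ind (e x : ℝ) : ℝ := Set.indicator {x : ℝ | |x| ≤ e} (fun _ => (1 : ℝ)) x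

lemma ind_of_le {e x : ℝ} (h : |x| ≤ e) : ind e x = 1 := by
  unfold ind; exact indicator_of_mem (show x ∈ {x : ℝ | |x| ≤ e} from h) _
lemma ind_of_lt {e x : ℝ} (h : e < |x|) : ind e x = 0 := by
  unfold ind; exact indicator_of_notMem (fun h' : x ∈ {x : ℝ | |x| ≤ e} => absurd h' (not_le.2 h)) _
lemma ind_nonneg (e x : ℝ) : 0 ≤ ind e x := by
  unfold ind; exact indicator_nonneg (fun _ _ => zero_le_one) _
lemma measurable_ind (e : ℝ) : Measurable (ind e) := by
  unfold ind
  exact measurable_const.indicator (measurableSet_le (by fun_prop) (by fun_prop))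

def Phi (k : ℕ) (e : ℝ) (m : Measure ℝ) (w : ℝ) : ℝ := ∫ x, x ^ (2 * k) * ind e (w + x) ∂m

namespace LP
variable {Y Cp Cm : ℝ} {s G : ℝ → ℝ} {D0 K : ℝ}

lemma large_bound (H : LP Y Cp Cm s G D0 K) (b : ℝ) {k : ℕ} (hk : 1 ≤ k) :
    ∃ C : ℝ, 0 ≤ C ∧ ∀ e h : ℝ, 0 < e → e ≤ 1 → 0 < h →
      ∀ (m : Measure ℝ) [IsProbabilityMeasure m],
      (∀ u, charFun m u = Complex.exp (h * psiG b s u)) →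
      ∀ w : ℝ, |Phi k e m w| ≤ C * (h * e ^ (-Y)) * (e + |w|) ^ (2 * k) := by
  obtain ⟨γ, Hγ⟩ := exists_frep_pow k θ4
  set I := ∫ ξ : ℝ, (1 + ξ ^ 2) ^ 2 * ‖γ ξ‖ with hI
  have hIn : 0 ≤ I := integral_nonneg fun ξ => by positivity
  have hD := H.hD0
  have hmI := mI_nonneg (1 + Y)
  have hmY := mI_nonneg Y
  have hC : 0 ≤ Cψ Y D0 b := by unfold Cψ; positivity
  refine ⟨Cψ Y D0 b * I, by positivity, ?_⟩
  intro e h he he1 hh m _ hm w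
  have hp : 0 < e ^ (-Y) := Real.rpow_pos_of_pos he _
  set R := e + |w| with hR
  have hR0 : 0 < R := by positivity
  have heR : e ≤ R := by rw [hR]; linarith [abs_nonneg w]
  have hg : Continuous (fun v => v ^ (2 * k) * θ4 v) := by
    have := θ4.continuous
    fun_prop
  have h1 := Hγ.first_order m (1 / R) 0 (Cψ Y D0 b * (h * e ^ (-Y))) (fun ξ => by
    have h2 := norm_charFun_le_one (μ := m) (t := 1 / R * ξ)
    rw [hm] at h2 ⊢
    have h3 := H.psi_le b he he1 (1 / R * ξ)
    refine (norm_exp_sub_one_le' ?_).trans ?_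
    · rw [Complex.norm_exp] at h2
      exact Real.exp_le_one_iff.1 h2
    · rw [norm_mul, Complex.norm_real, Real.norm_eq_abs, abs_of_pos hh]
      have h4 : (e * (1 / R * ξ)) ^ 2 ≤ ξ ^ 2 := by
        have : e / R ≤ 1 := (div_le_one hR0).2 heR
        calc (e * (1 / R * ξ)) ^ 2 = (e / R) ^ 2 * ξ ^ 2 := by ring
          _ ≤ 1 ^ 2 * ξ ^ 2 := by gcongr
          _ = _ := by ring
      calc _ ≤ h * (Cψ Y D0 b * e ^ (-Y) * (1 + ξ ^ 2)) := by
            refine mul_le_mul_of_nonneg_left (h3.trans ?_) hh.le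
            gcongr
        _ = _ := by ring)
  have hk0 : 2 * k ≠ 0 := by omega
  simp only [zero_pow hk0, zero_mul, sub_zero, ← hI] at h1
  have i1 := Hγ.integrable_comp hg m (1 / R) 0
  have hpt : ∀ x, |x ^ (2 * k) * ind e (w + x)|
      ≤ R ^ (2 * k) * ((1 / R * x + 0) ^ (2 * k) * θ4 (1 / R * x + 0)) := by
    intro x
    have hx2 : 0 ≤ x ^ (2 * k) := by rw [pow_mul]; positivity
    rw [abs_of_nonneg (mul_nonneg hx2 (ind_nonneg _ _)), add_zero]
    have e1 : R ^ (2 * k) * ((1 / R * x) ^ (2 * k) * θ4 (1 / R * x))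
        = x ^ (2 * k) * θ4 (1 / R * x) := by
      rw [← mul_assoc, ← mul_pow]
      congr 2
      field_simp
    rw [e1]
    refine mul_le_mul_of_nonneg_left ?_ hx2
    by_cases hx : |w + x| ≤ e
    · rw [ind_of_le hx, θ4_one]
      rw [abs_mul, abs_of_pos (by positivity : 0 < 1 / R), one_div, inv_mul_le_iff₀ hR0, mul_one]
      have := abs_sub (w + x) w
      rw [add_sub_cancel_left] at this
      linarith
    · rw [ind_of_lt (not_le.1 hx)]; exact θ4.nonneg
  have hmi := measurable_ind e
  have i2 : Integrable (fun x => x ^ (2 * k) * ind e (w + x)) m :=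
    (i1.const_mul (R ^ (2 * k))).mono' (Measurable.aestronglyMeasurable (by fun_prop))
      (ae_of_all _ hpt)
  refine abs_integral_le_integral_abs.trans ((integral_mono i2.abs
    (i1.const_mul (R ^ (2 * k))) hpt).trans ?_)
  rw [integral_const_mul]
  calc _ ≤ R ^ (2 * k) * (Cψ Y D0 b * (h * e ^ (-Y)) * I) := by
        gcongr
        exact (le_abs_self _).trans h1
    _ = _ := by ring

end LP

lemma int_rpow_ind {p r : ℝ} (hp : 0 < p) (hr : 0 ≤ r) :
    Integrable (indicator (Ioc 0 r) (fun x : ℝ => x ^ (p - 1))) ∧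
    ∫ x, indicator (Ioc 0 r) (fun x : ℝ => x ^ (p - 1)) x = r ^ p / p := by
  constructor
  · rw [integrable_indicator_iff measurableSet_Ioc,
      ← intervalIntegrable_iff_integrableOn_Ioc_of_le hr]
    exact intervalIntegral.intervalIntegrable_rpow' (by linarith)
  · rw [integral_indicator measurableSet_Ioc, ← intervalIntegral.integral_of_le hr,
      integral_rpow (Or.inl (by linarith))]
    simp [Real.zero_rpow hp.ne']

lemma main_integral {Y Cp Cm e w : ℝ} {k : ℕ} (hY : 0 < 2 * (k:ℝ) - Y) (hw : |w| ≤ e) :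
    ∫ x, (x ^ (2 * k) * ind e (w + x)) * s0 Y Cp Cm x =
      (Cp * (e - w) ^ (2 * (k:ℝ) - Y) + Cm * (e + w) ^ (2 * (k:ℝ) - Y)) / (2 * k - Y) := by
  obtain ⟨hw1, hw2⟩ := abs_le.1 hw
  set p := 2 * (k:ℝ) - Y with hp
  obtain ⟨i1, e1⟩ := int_rpow_ind hY (r := e - w) (by linarith)
  obtain ⟨i2, e2⟩ := int_rpow_ind hY (r := e + w) (by linarith)
  have hpow : ∀ x : ℝ, 0 < x → x ^ (2 * k) * x ^ (-1 - Y) = x ^ (p - 1) := by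
    intro x hx
    rw [← Real.rpow_natCast, ← Real.rpow_add hx]
    congr 1
    push_cast; rw [hp]; ring
  have hpt : ∀ x, (x ^ (2 * k) * ind e (w + x)) * s0 Y Cp Cm x
      = Cp * indicator (Ioc 0 (e - w)) (fun x : ℝ => x ^ (p - 1)) x
        + Cm * indicator (Ioc 0 (e + w)) (fun x : ℝ => x ^ (p - 1)) (-x) := by
    intro x
    rcases lt_trichotomy x 0 with hx | rfl | hx
    · rw [s0_neg hx, indicator_of_notMem (by simp [hx.le])]
      have hx' : 0 < -x := by linarith
      by_cases h : -x ≤ e + w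
      · rw [indicator_of_mem (by simp [hx]; linarith), ind_of_le (abs_le.2 ⟨by linarith, by linarith⟩),
          ← hpow _ hx']
        have : (-x) ^ (2 * k) = x ^ (2 * k) := by rw [pow_mul, neg_sq, ← pow_mul]
        rw [this]; ring
      · rw [indicator_of_notMem (by simp; intro _; linarith), ind_of_lt]
        · ring
        · rw [lt_abs]; right; linarith
    · simp [s0_zero]
    · rw [s0_pos hx, indicator_of_notMem (a := -x) (by simp [hx.le])]
      by_cases h : x ≤ e - w
      · rw [indicator_of_mem (by simp [hx]; linarith), ind_of_le (abs_le.2 ⟨by linarith, by linarith⟩),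
          ← hpow _ hx]
        ring
      · rw [indicator_of_notMem (by simp; intro _; linarith), ind_of_lt]
        · ring
        · rw [lt_abs]; left; linarith
  simp_rw [hpt]
  rw [integral_add (i1.const_mul _) (i2.comp_neg.const_mul _), integral_const_mul,
    integral_const_mul, e1, integral_neg_eq_self (indicator (Ioc 0 (e + w)) fun x => x ^ (p - 1)), e2]
  ring

lemma taylor_pow (p : ℝ) : ∃ C : ℝ, 0 ≤ C ∧ ∀ t : ℝ, |t| ≤ 1/4 →
    |(1 + t) ^ p - 1 - p * t| ≤ C * t ^ 2 := by
  have hpos : ∀ t ∈ Icc (-(1/4) : ℝ) (1/4), 0 < 1 + t := fun t ht => by linarith [ht.1]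
  have hcont : ContinuousOn (fun t : ℝ => p * ((p - 1) * (1 + t) ^ (p - 2))) (Icc (-(1/4)) (1/4)) := by
    refine continuousOn_const.mul (continuousOn_const.mul ?_)
    refine ContinuousOn.rpow_const (by fun_prop) (fun t ht => Or.inl (hpos t ht).ne')
  obtain ⟨C, hC⟩ := isCompact_Icc.exists_bound_of_continuousOn hcont
  have h0 : (0:ℝ) ∈ Icc (-(1/4) : ℝ) (1/4) := by constructor <;> norm_num
  have hC0 : 0 ≤ C := (norm_nonneg _).trans (hC 0 h0)
  refine ⟨C, hC0, fun t ht => ?_⟩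
  have ht' := abs_le.1 ht
  have d1 : ∀ u ∈ Icc (-(1/4) : ℝ) (1/4), HasDerivAt (fun u : ℝ => (1 + u) ^ p) (p * (1 + u) ^ (p - 1)) u := by
    intro u hu
    have := ((hasDerivAt_id u).const_add 1).rpow_const (p := p) (Or.inl (hpos u hu).ne')
    simpa using this
  have d2 : ∀ u ∈ Icc (-(1/4) : ℝ) (1/4), HasDerivAt (fun u : ℝ => p * (1 + u) ^ (p - 1))
      (p * ((p - 1) * (1 + u) ^ (p - 2))) u := by
    intro u hu
    have := (((hasDerivAt_id u).const_add 1).rpow_const (p := p - 1)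
      (Or.inl (hpos u hu).ne')).const_mul p
    rw [show p - 1 - 1 = p - 2 by ring] at this
    simpa using this
  have b1 : ∀ u ∈ Icc (-(1/4) : ℝ) (1/4), |p * (1 + u) ^ (p - 1) - p| ≤ C * |u| := by
    intro u hu
    have := (convex_Icc (-(1/4) : ℝ) (1/4)).norm_image_sub_le_of_norm_hasDerivWithin_le
      (fun v hv => (d2 v hv).hasDerivWithinAt) hC h0 hu
    simpa using this
  have hsub : uIcc 0 t ⊆ Icc (-(1/4) : ℝ) (1/4) := by
    exact uIcc_subset_Icc h0 ht'
  have b2 := (convex_uIcc 0 t).norm_image_sub_le_of_norm_hasDerivWithin_le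
    (f := fun u : ℝ => (1 + u) ^ p - p * u) (f' := fun u => p * (1 + u) ^ (p - 1) - p) (C := C * |t|)
    (fun v hv => by
      have : HasDerivAt (fun u : ℝ => (1 + u) ^ p - p * u) (p * (1 + v) ^ (p - 1) - p * 1) v :=
        (d1 v (hsub hv)).sub ((hasDerivAt_id v).const_mul p)
      rw [mul_one] at this
      exact this.hasDerivWithinAt)
    (fun v hv => (b1 v (hsub hv)).trans (
      mul_le_mul_of_nonneg_left (by simpa using abs_sub_left_of_mem_uIcc hv) hC0)) left_mem_uIcc right_mem_uIcc
  simp only [add_zero, Real.one_rpow, mul_zero, sub_zero, Real.norm_eq_abs] at b2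
  calc |(1 + t) ^ p - 1 - p * t| = |(1 + t) ^ p - p * t - 1| := by congr 1; ring
    _ ≤ C * |t| * |t| := b2
    _ = C * t ^ 2 := by rw [mul_assoc, ← sq, sq_abs]

lemma taylor_scaled (p : ℝ) : ∃ C : ℝ, 0 ≤ C ∧ ∀ e w : ℝ, 0 < e → |w| ≤ e / 4 →
    |(e + w) ^ p - e ^ p - p * e ^ (p - 1) * w| ≤ C * (e ^ (p - 2) * w ^ 2) := by
  obtain ⟨C, hC, hT⟩ := taylor_pow p
  refine ⟨C, hC, fun e w he hw => ?_⟩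
  have ht := hT (w / e) (by rw [abs_div, abs_of_pos he, div_le_iff₀ he]; linarith)
  have hw' := abs_le.1 hw
  have h1 : (e + w) ^ p = e ^ p * (1 + w / e) ^ p := by
    have : 0 ≤ 1 + w / e := by
      have : 1 + w / e = (e + w) / e := by field_simp
      rw [this]; apply div_nonneg <;> linarith
    rw [← Real.mul_rpow he.le this]; congr 1; field_simp
  have h2 : e ^ (p - 1) = e ^ p / e := by rw [Real.rpow_sub he, Real.rpow_one]
  have h3 : e ^ (p - 2) = e ^ p / e ^ 2 := by rw [Real.rpow_sub he]; norm_num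
  have hp : 0 < e ^ p := Real.rpow_pos_of_pos he _
  rw [h1, h2, h3]
  calc _ = |e ^ p * ((1 + w / e) ^ p - 1 - p * (w / e))| := by congr 1; ring
    _ = e ^ p * |(1 + w / e) ^ p - 1 - p * (w / e)| := by rw [abs_mul, abs_of_pos hp]
    _ ≤ e ^ p * (C * (w / e) ^ 2) := by gcongr
    _ = _ := by ring


lemma aux_comb {a b c d x y z : ℝ} (ha : 0 ≤ a) (hb : 0 ≤ b) (hc : 0 ≤ c) (hd : 0 ≤ d)
    (hx : 0 ≤ x) (hy : 0 ≤ y) (hz : 0 ≤ z) :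
    a * x + b * y ≤ (a + b + c + d) * (x + y + z) ∧ d * z + c * y ≤ (a + b + c + d) * (x + y + z) := by
  constructor
  · have : 0 ≤ a * y + a * z + b * x + b * z + (c + d) * (x + y + z) := by positivity
    linarith
  · have : 0 ≤ d * x + d * y + c * x + c * z + (a + b) * (x + y + z) := by positivity
    linarith


lemma LP.pointwise {Y Cp Cm : ℝ} {s G : ℝ → ℝ} {D0 K : ℝ} (H : LP Y Cp Cm s G D0 K) (b : ℝ)
    {k : ℕ} (hk : 1 ≤ k) : ∃ C : ℝ, 0 ≤ C ∧ ∀ e h : ℝ, 0 < e → e ≤ 1 → 0 < h →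
      h * e ^ (-Y) ≤ 1 → ∀ (m : Measure ℝ) [IsProbabilityMeasure m],
      (∀ u, charFun m u = Complex.exp (h * psiG b s u)) → ∀ w : ℝ,
      |Phi k e m w - h * ((Cp + Cm) / (2 * (k:ℝ) - Y)) * e ^ (2 * (k:ℝ) - Y)
          - h * (Cm - Cp) * e ^ (2 * (k:ℝ) - Y - 1) * (w * ind (e / 4) w)|
        ≤ C * (e ^ (2 * k) * ((h * e ^ (-Y)) ^ 2 + h * e ^ (1 - Y))
          + h * e ^ (2 * (k:ℝ) - Y - 2) * w ^ 2 + h * e ^ (-Y - 2) * |w| ^ (2 * k + 2)) := by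
  have hk1 : (1:ℝ) ≤ k := by exact_mod_cast hk
  have hY2 := H.hY2
  have hCp := H.hCp
  have hCm := H.hCm
  have hp : 0 < 2 * (k:ℝ) - Y := by linarith
  obtain ⟨C1, hC1, core⟩ := H.core b hk ((2:ℝ) ^ (2 * k)) (by positivity)
  obtain ⟨C2, hC2, large⟩ := H.large_bound b hk
  obtain ⟨C3, hC3, tay⟩ := taylor_scaled (2 * (k:ℝ) - Y)
  set p := 2 * (k:ℝ) - Y with hpdef
  set a := (Cp + Cm) / p with hadef
  have ha : 0 ≤ a := by positivity
  have haC : 0 ≤ C3 * a := by positivity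
  refine ⟨C1 + C3 * a + 16 * a + C2 * 5 ^ (2 * k) * 16, by positivity, ?_⟩
  intro e h he he1 hh hL m _ hcf w
  have hep : ∀ r : ℝ, 0 < e ^ r := fun r => Real.rpow_pos_of_pos he r
  set T1 := e ^ (2 * k) * ((h * e ^ (-Y)) ^ 2 + h * e ^ (1 - Y)) with hT1
  set T2 := h * e ^ (p - 2) * w ^ 2 with hT2
  set T3 := h * e ^ (-Y - 2) * |w| ^ (2 * k + 2) with hT3
  have t1 : 0 ≤ T1 := by have := hep (-Y); have := hep (1 - Y); positivity
  have t2 : 0 ≤ T2 := by have := hep (p - 2); positivity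
  have t3 : 0 ≤ T3 := by have := hep (-Y - 2); positivity
  have hC5 : 0 ≤ C2 * 5 ^ (2 * k) * 16 := by positivity
  by_cases hw : |w| ≤ e / 4
  · rw [ind_of_le hw, mul_one]
    have hw' := abs_le.1 hw
    have hc := core e h he he1 hh hL m hcf (fun x => (x / e) ^ (2 * k) * ind e (w + x))
      (by have := measurable_ind e; fun_prop) ?_ ?_ ?_
    · have hPhi : Phi k e m w = e ^ (2 * k) * ∫ x, (x / e) ^ (2 * k) * ind e (w + x) ∂m := by
        unfold Phi
        rw [← integral_const_mul]
        congr 1; ext x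
        rw [div_pow]; field_simp
      have hI : ∫ x, ((x / e) ^ (2 * k) * ind e (w + x)) * s0 Y Cp Cm x
          = (e ^ (2 * k))⁻¹ * ((Cp * (e - w) ^ p + Cm * (e + w) ^ p) / p) := by
        rw [← main_integral hp (by linarith), ← integral_const_mul]
        congr 1; ext x
        rw [div_pow]; field_simp
      rw [hI] at hc
      have e1 : |Phi k e m w - h * ((Cp * (e - w) ^ p + Cm * (e + w) ^ p) / p)| ≤ C1 * T1 := by
        have : Phi k e m w - h * ((Cp * (e - w) ^ p + Cm * (e + w) ^ p) / p)
            = e ^ (2 * k) * ((∫ x, (x / e) ^ (2 * k) * ind e (w + x) ∂m)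
              - h * ((e ^ (2 * k))⁻¹ * ((Cp * (e - w) ^ p + Cm * (e + w) ^ p) / p))) := by
          rw [hPhi]; field_simp
        rw [this, abs_mul, abs_of_pos (by positivity : 0 < e ^ (2 * k))]
        calc _ ≤ e ^ (2 * k) * (C1 * ((h * e ^ (-Y)) ^ 2 + h * e ^ (1 - Y))) := by gcongr
          _ = C1 * T1 := by rw [hT1]; ring
      have e2 := tay e w he hw
      have e3 := tay e (-w) he (by rwa [abs_neg])
      have e4 : |h * ((Cp * (e - w) ^ p + Cm * (e + w) ^ p) / p) - h * a * e ^ p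
          - h * (Cm - Cp) * e ^ (p - 1) * w| ≤ C3 * a * T2 := by
        have : h * ((Cp * (e - w) ^ p + Cm * (e + w) ^ p) / p) - h * a * e ^ p
          - h * (Cm - Cp) * e ^ (p - 1) * w
          = (h * Cp / p) * ((e + -w) ^ p - e ^ p - p * e ^ (p - 1) * (-w))
            + (h * Cm / p) * ((e + w) ^ p - e ^ p - p * e ^ (p - 1) * w) := by
          rw [hadef, ← sub_eq_add_neg]; field_simp; ring
        rw [this]
        calc _ ≤ (h * Cp / p) * (C3 * (e ^ (p - 2) * (-w) ^ 2))
              + (h * Cm / p) * (C3 * (e ^ (p - 2) * w ^ 2)) := by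
              refine (abs_add_le _ _).trans ?_
              rw [abs_mul, abs_mul, abs_of_nonneg (by positivity : 0 ≤ h * Cp / p),
                abs_of_nonneg (by positivity : 0 ≤ h * Cm / p)]
              gcongr
          _ = C3 * a * T2 := by rw [hT2, hadef]; ring
      calc _ = |(Phi k e m w - h * ((Cp * (e - w) ^ p + Cm * (e + w) ^ p) / p))
            + (h * ((Cp * (e - w) ^ p + Cm * (e + w) ^ p) / p) - h * a * e ^ p
          - h * (Cm - Cp) * e ^ (p - 1) * w)| := by congr 1; ring
        _ ≤ C1 * T1 + C3 * a * T2 := (abs_add_le _ _).trans (add_le_add e1 e4)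
        _ ≤ _ := (aux_comb hC1 haC (by positivity) hC5 t1 t2 t3).1
    · intro x
      by_cases hx : |w + x| ≤ e
      · rw [ind_of_le hx, mul_one, abs_pow, abs_div, abs_of_pos he]
        gcongr
        rw [div_le_iff₀ he]
        have := abs_le.1 hx
        exact abs_le.2 ⟨by linarith, by linarith⟩
      · rw [ind_of_lt (not_le.1 hx)]; simp
    · intro x hx
      have := abs_le.1 hx
      rw [ind_of_le (abs_le.2 ⟨by linarith, by linarith⟩), mul_one]
    · intro x hx
      rw [ind_of_lt, mul_zero]
      have := abs_sub_abs_le_abs_sub x (-w)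
      rw [abs_neg, sub_neg_eq_add, add_comm x w] at this
      linarith
  · rw [not_le] at hw
    rw [ind_of_lt hw, mul_zero, mul_zero, sub_zero]
    have hl := large e h he he1 hh m hcf w
    have hw0 : 0 < |w| := by linarith
    have hsq : e ^ 2 ≤ 16 * w ^ 2 := by
      rw [← sq_abs w]; nlinarith
    have r1 : e ^ (-Y) = e ^ (-Y - 2) * e ^ 2 := by
      rw [← Real.rpow_natCast e 2, ← Real.rpow_add he]; congr 1; push_cast; ring
    have r2 : e ^ p = e ^ (p - 2) * e ^ 2 := by
      rw [← Real.rpow_natCast e 2, ← Real.rpow_add he]; congr 1; push_cast; ring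
    have b1 : |Phi k e m w| ≤ C2 * 5 ^ (2 * k) * 16 * T3 := by
      refine hl.trans ?_
      have hp2 := hep (-Y - 2)
      calc C2 * (h * e ^ (-Y)) * (e + |w|) ^ (2 * k)
          ≤ C2 * (h * (e ^ (-Y - 2) * (16 * w ^ 2))) * (5 * |w|) ^ (2 * k) := by
            rw [r1]; gcongr; linarith
        _ = _ := by rw [hT3, mul_pow, pow_add, sq_abs]; ring
    have b2 : |h * a * e ^ p| ≤ 16 * a * T2 := by
      have hp2 := hep (p - 2)
      rw [abs_of_nonneg (by have := hep p; positivity), r2]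
      calc h * a * (e ^ (p - 2) * e ^ 2) ≤ h * a * (e ^ (p - 2) * (16 * w ^ 2)) := by gcongr
        _ = _ := by rw [hT2]; ring
    calc _ ≤ |Phi k e m w| + |h * a * e ^ p| := abs_sub _ _
      _ ≤ C2 * 5 ^ (2 * k) * 16 * T3 + 16 * a * T2 := add_le_add b1 b2
      _ ≤ _ := (aux_comb hC1 haC (by positivity) hC5 t1 t2 t3).2


lemma LP.of_hyp {Y Cp Cm : ℝ} {q : ℝ → ℝ}
    (hY1 : 1 < Y) (hY2 : Y < 2) (hCp : 0 < Cp) (hCm : 0 < Cm)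
    (hq_meas : Measurable q) (hq_nonneg : ∀ x, 0 ≤ q x)
    (hq_bdd : ∃ M : ℝ, ∀ x, q x ≤ M)
    (hq_taylor : ∃ αp αm : ℝ, αp ≠ 0 ∧ αm ≠ 0 ∧
      IntegrableOn (fun x => |q x - 1 - αp * x| * x ^ (-Y - 1)) (Set.Ioc (0 : ℝ) 1) ∧
      IntegrableOn (fun x => |q x - 1 - αm * x| * |x| ^ (-Y - 1)) (Set.Ico (-1 : ℝ) 0)) :
    ∃ (G : ℝ → ℝ) (D0 K : ℝ), LP Y Cp Cm (levyDensity Y Cp Cm q) G D0 K := by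
  obtain ⟨M, hM⟩ := hq_bdd
  obtain ⟨αp, αm, -, -, hi1, hi2⟩ := hq_taylor
  have hM0 : 0 ≤ M := (hq_nonneg 0).trans (hM 0)
  set c : ℝ → ℝ := fun x => if 0 < x then Cp else if x < 0 then Cm else 0 with hc
  have hc0 : ∀ x, 0 ≤ c x := by intro x; simp only [hc]; split_ifs <;> linarith
  have hc1 : ∀ x, c x ≤ Cp + Cm := by intro x; simp only [hc]; split_ifs <;> linarith
  have hx0 : ∀ (x r : ℝ), 0 ≤ |x| ^ r := fun x r => Real.rpow_nonneg (abs_nonneg x) r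
  have hle : ∀ (f : ℝ → ℝ), (∀ x, 0 ≤ f x) → (∀ x, f x ≤ M + 1) →
      ∀ x, levyDensity Y Cp Cm f x ≤ (Cp + Cm) * (M + 1) * |x| ^ (-(1 + Y)) := by
    intro f hf0 hf x
    unfold levyDensity
    rw [show -1 - Y = -(1 + Y) by ring]
    have := hx0 x (-(1+Y))
    have := hc1 x
    have := hc0 x
    have := hf0 x
    have := hf x
    change c x * f x * _ ≤ _
    gcongr
  refine ⟨fun x => (Cp + Cm) * (Set.indicator (Set.Ioc 0 1) (fun x => |q x - 1 - αp * x| * x ^ (-Y - 1)) x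
      + Set.indicator (Set.Ico (-1) 0) (fun x => |q x - 1 - αm * x| * |x| ^ (-Y - 1)) x),
    (Cp + Cm) * (M + 1), (Cp + Cm) * (|αp| + |αm| + M + 1), ?_⟩
  have hG1 : ∀ x, 0 ≤ Set.indicator (Set.Ioc 0 1) (fun x => |q x - 1 - αp * x| * x ^ (-Y - 1)) x := by
    intro x
    refine Set.indicator_nonneg (fun y hy => ?_) x
    exact mul_nonneg (abs_nonneg _) (Real.rpow_nonneg hy.1.le _)
  have hG2 : ∀ x, 0 ≤ Set.indicator (Set.Ico (-1) 0) (fun x => |q x - 1 - αm * x| * |x| ^ (-Y - 1)) x := by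
    intro x
    refine Set.indicator_nonneg (fun y hy => ?_) x
    exact mul_nonneg (abs_nonneg _) (hx0 _ _)
  refine ⟨hY1, hY2, hCp, hCm, measurable_levyDensity hq_meas, ?_, ?_, ?_, by positivity, by positivity, ?_, ?_, ?_⟩
  · intro x
    unfold levyDensity
    exact mul_nonneg (mul_nonneg (hc0 x) (hq_nonneg x)) (hx0 _ _)
  · exact hle q hq_nonneg (fun x => by linarith [hM x])
  · exact hle _ (fun x => zero_le_one) (fun x => by linarith)
  · refine Integrable.const_mul (Integrable.add ?_ ?_) _
    · exact (integrable_indicator_iff measurableSet_Ioc).2 hi1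
    · exact (integrable_indicator_iff measurableSet_Ico).2 hi2
  · intro x
    have := hG1 x
    have := hG2 x
    positivity
  · intro x
    have hd : |levyDensity Y Cp Cm q x - s0 Y Cp Cm x| = c x * |q x - 1| * |x| ^ (-Y - 1) := by
      have : levyDensity Y Cp Cm q x - s0 Y Cp Cm x = c x * (q x - 1) * |x| ^ (-Y - 1) := by
        unfold s0 levyDensity
        rw [show -1 - Y = -Y - 1 by ring]
        simp only [hc]; ring
      rw [this, abs_mul, abs_mul, abs_of_nonneg (hc0 x), abs_of_nonneg (hx0 _ _)]
    rw [hd]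
    have hstep : ∀ α : ℝ, |α| ≤ |αp| + |αm| + M + 1 → x ≠ 0 → c x * |q x - 1| * |x| ^ (-Y - 1)
        ≤ (Cp + Cm) * (|q x - 1 - α * x| * |x| ^ (-Y - 1))
          + (Cp + Cm) * (|αp| + |αm| + M + 1) * |x| ^ (-Y) := by
      intro α hα hx
      have h1 : |q x - 1| ≤ |q x - 1 - α * x| + |α| * |x| := by
        calc |q x - 1| = |(q x - 1 - α * x) + α * x| := by congr 1; ring
          _ ≤ _ := (abs_add_le _ _).trans (by rw [abs_mul])
      have h2 : |x| ^ (-Y) = |x| * |x| ^ (-Y - 1) := by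
        rw [← Real.rpow_one_add' (abs_nonneg x) (by linarith)]; congr 1; ring
      rw [h2]
      have h3 := hx0 x (-Y - 1)
      have h4 := hc0 x
      have h5 := hc1 x
      calc c x * |q x - 1| * |x| ^ (-Y - 1)
          ≤ (Cp + Cm) * (|q x - 1 - α * x| + (|αp| + |αm| + M + 1) * |x|) * |x| ^ (-Y - 1) := by
            gcongr
            exact h1.trans (by gcongr)
        _ = _ := by ring
    have ap := abs_nonneg αp
    have am := abs_nonneg αm
    rcases lt_trichotomy x 0 with hx | hx | hx
    · by_cases hx1 : -1 ≤ x
      · have := hstep αm (by linarith) hx.ne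
        rw [Set.indicator_of_mem (show x ∈ Set.Ico (-1:ℝ) 0 from ⟨hx1, hx⟩)]
        have := mul_nonneg (by positivity : 0 ≤ Cp + Cm) (hG1 x)
        rw [mul_add]
        linarith
      · have h1 := hstep 0 (by rw [abs_zero]; positivity) hx.ne
        refine le_trans ?_ (le_add_of_nonneg_left (mul_nonneg (by positivity) (add_nonneg (hG1 x) (hG2 x))))
        have h2 : |x| ^ (-Y - 1) ≤ |x| ^ (-Y) :=
          Real.rpow_le_rpow_of_exponent_le (by rw [abs_of_neg hx]; linarith) (by linarith)
        have h3 : |q x - 1| ≤ |αp| + |αm| + M + 1 :=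
          abs_le.2 ⟨by linarith [hq_nonneg x], by linarith [hM x]⟩
        have := hc0 x
        have := hc1 x
        have := hx0 x (-Y - 1)
        gcongr
    · have : c x = 0 := by simp [hc, hx]
      rw [this, zero_mul, zero_mul]
      have := hx0 x (-Y)
      have := hG1 x
      have := hG2 x
      positivity
    · by_cases hx1 : x ≤ 1
      · have := hstep αp (by linarith) hx.ne'
        rw [Set.indicator_of_mem (show x ∈ Set.Ioc (0:ℝ) 1 from ⟨hx, hx1⟩)]
        have := mul_nonneg (by positivity : 0 ≤ Cp + Cm) (hG2 x)
        rw [mul_add]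
        rw [abs_of_pos hx] at *
        linarith
      · refine le_trans ?_ (le_add_of_nonneg_left (mul_nonneg (by positivity) (add_nonneg (hG1 x) (hG2 x))))
        have h2 : |x| ^ (-Y - 1) ≤ |x| ^ (-Y) :=
          Real.rpow_le_rpow_of_exponent_le (by rw [abs_of_pos hx]; linarith) (by linarith)
        have h3 : |q x - 1| ≤ |αp| + |αm| + M + 1 :=
          abs_le.2 ⟨by linarith [hq_nonneg x], by linarith [hM x]⟩
        have := hc0 x
        have := hc1 x
        have := hx0 x (-Y - 1)
        gcongr


lemma gauss_pow_integrable (n : ℕ) (hn : n ≠ 0) (a t : ℝ) :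
    Integrable (fun w : ℝ => (a + t * |w|) ^ n) (gaussianReal 0 1) := by
  have h1 : MemLp (fun w : ℝ => w) (n : ℝ≥0∞) (gaussianReal 0 1) := by
    have := memLp_id_gaussianReal (μ := 0) (v := 1) (n : ℝ≥0)
    exact_mod_cast this
  have h2 : MemLp (fun w : ℝ => a + t * |w|) (n : ℝ≥0∞) (gaussianReal 0 1) :=
    (memLp_const a).add (h1.norm.const_mul t)
  have h3 := h2.integrable_norm_pow hn
  refine h3.mono' ?_ (ae_of_all _ fun w => ?_)
  · fun_prop
  · rw [norm_pow]

lemma gauss_avg {F : ℝ → ℝ} {A0 B0 r C T c2 c3 t : ℝ} {n : ℕ} (hn : n ≠ 0)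
    (hF : Integrable (fun w => F (t * w)) (gaussianReal 0 1))
    (hb : ∀ w, |F w - A0 - B0 * (w * ind r w)| ≤ C * (T + c2 * w ^ 2 + c3 * |w| ^ n)) :
    |(∫ w, F (t * w) ∂(gaussianReal 0 1)) - A0| ≤
      C * (T + c2 * t ^ 2 * (∫ w, |w| ^ 2 ∂(gaussianReal 0 1))
        + c3 * |t| ^ n * ∫ w, |w| ^ n ∂(gaussianReal 0 1)) := by
  have i2 : Integrable (fun w : ℝ => |w| ^ 2) (gaussianReal 0 1) := by
    simpa using gauss_pow_integrable 2 (by norm_num) 0 1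
  have i3 : Integrable (fun w : ℝ => |w| ^ n) (gaussianReal 0 1) := by
    simpa using gauss_pow_integrable n hn 0 1
  have i1 : Integrable (fun w : ℝ => |w|) (gaussianReal 0 1) := by
    simpa using gauss_pow_integrable 1 (by norm_num) 0 1
  have io : Integrable (fun w : ℝ => (t * w) * ind r (t * w)) (gaussianReal 0 1) := by
    refine (i1.const_mul |t|).mono' ?_ (ae_of_all _ fun w => ?_)
    · have := measurable_ind r
      exact (by fun_prop : Measurable (fun w : ℝ => (t * w) * ind r (t * w))).aestronglyMeasurable
    · rw [Real.norm_eq_abs, abs_mul, abs_mul]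
      have : |ind r (t * w)| ≤ 1 := by
        rcases le_or_gt (|t * w|) r with h | h
        · rw [ind_of_le h]; simp
        · rw [ind_of_lt h]; simp
      exact mul_le_of_le_one_right (by positivity) this
  have hodd : ∫ w, (t * w) * ind r (t * w) ∂(gaussianReal 0 1) = 0 := by
    have h1 : ∫ w, (t * w) * ind r (t * w) ∂(gaussianReal 0 1)
        = ∫ w, (t * -w) * ind r (t * -w) ∂(gaussianReal 0 1) := by
      conv_lhs => rw [show gaussianReal 0 1 = (gaussianReal 0 1).map (fun x => -x) by
        rw [gaussianReal_map_neg, neg_zero]]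
      rw [integral_map (by fun_prop)]
      have := measurable_ind r
      exact (by fun_prop : Measurable (fun w : ℝ => (t * w) * ind r (t * w))).aestronglyMeasurable
    have h2 : ∀ w, (t * -w) * ind r (t * -w) = - ((t * w) * ind r (t * w)) := by
      intro w
      have : ind r (t * -w) = ind r (t * w) := by
        unfold ind
        simp [Set.indicator, abs_mul]
      rw [this]; ring
    simp_rw [h2, integral_neg] at h1
    linarith
  have key : (∫ w, F (t * w) ∂(gaussianReal 0 1)) - A0
      = ∫ w, (F (t * w) - A0 - B0 * ((t * w) * ind r (t * w))) ∂(gaussianReal 0 1) := by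
    have j1 : Integrable (fun w => F (t * w) - A0) (gaussianReal 0 1) := hF.sub (integrable_const _)
    rw [integral_sub j1 (io.const_mul _),
      integral_sub hF (integrable_const _), integral_const_mul, hodd]
    simp
  rw [key, ← Real.norm_eq_abs]
  refine (norm_integral_le_of_norm_le (g := fun w => C * (T + c2 * t ^ 2 * |w| ^ 2 + c3 * |t| ^ n * |w| ^ n)) ?_
    (ae_of_all _ fun w => ?_)).trans (le_of_eq ?_)
  · exact (((integrable_const _).add (i2.const_mul _)).add (i3.const_mul _)).const_mul _
  · refine (hb (t * w)).trans (le_of_eq ?_)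
    rw [abs_mul, mul_pow, mul_pow, sq_abs]; ring
  · have j1 : Integrable (fun w : ℝ => T + c2 * t ^ 2 * |w| ^ 2) (gaussianReal 0 1) :=
      (integrable_const _).add (i2.const_mul _)
    rw [integral_const_mul, integral_add j1 (i3.const_mul _),
      integral_add (integrable_const _) (i2.const_mul _), integral_const_mul, integral_const_mul]
    simp

lemma gauss_fubini {k : ℕ} (hk : 1 ≤ k) {e : ℝ} (he : 0 ≤ e) (t : ℝ) (m : Measure ℝ)
    [IsProbabilityMeasure m] :
    Integrable (fun w => Phi k e m (t * w)) (gaussianReal 0 1) ∧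
    ∫ z : ℝ × ℝ, z.2 ^ (2 * k) * ind e (t * z.1 + z.2) ∂((gaussianReal 0 1).prod m)
      = ∫ w, Phi k e m (t * w) ∂(gaussianReal 0 1) := by
  have hi : Integrable (fun z : ℝ × ℝ => z.2 ^ (2 * k) * ind e (t * z.1 + z.2))
      ((gaussianReal 0 1).prod m) := by
    refine ((gauss_pow_integrable (2 * k) (by omega) e |t|).comp_fst m).mono' ?_
      (ae_of_all _ fun z => ?_)
    · have := measurable_ind e
      exact (by fun_prop : Measurable
        (fun z : ℝ × ℝ => z.2 ^ (2 * k) * ind e (t * z.1 + z.2))).aestronglyMeasurable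
    · rw [Real.norm_eq_abs]
      rcases le_or_gt (|t * z.1 + z.2|) e with h | h
      · rw [ind_of_le h, mul_one, abs_pow]
        gcongr
        calc |z.2| = |(t * z.1 + z.2) - t * z.1| := by congr 1; ring
          _ ≤ |t * z.1 + z.2| + |t * z.1| := abs_sub _ _
          _ ≤ _ := by rw [abs_mul]; gcongr
      · rw [ind_of_lt h, mul_zero, abs_zero]
        positivity
  exact ⟨hi.integral_prod_left, integral_prod _ hi⟩

lemma LP.averaged {Y Cp Cm : ℝ} {s G : ℝ → ℝ} {D0 K : ℝ} (H : LP Y Cp Cm s G D0 K) (b σ : ℝ)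
    (hσ : 0 < σ) {k : ℕ} (hk : 1 ≤ k) : ∃ C : ℝ, 0 ≤ C ∧ ∀ e h : ℝ, 0 < e → e ≤ 1 → 0 < h →
      h ≤ e ^ 2 → ∀ (m : Measure ℝ) [IsProbabilityMeasure m],
      (∀ u, charFun m u = Complex.exp (h * psiG b s u)) →
      |(∫ w, Phi k e m (σ * √h * w) ∂(gaussianReal 0 1))
          - (Cp + Cm) / (2 * (k:ℝ) - Y) * h * e ^ (2 * (k:ℝ) - Y)|
        ≤ C * (h ^ 2 * e ^ (2 * (k:ℝ) - Y - 2) + h * e ^ (2 * (k:ℝ) - Y / 2)) := by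
  obtain ⟨C, hC, hpt⟩ := H.pointwise b hk
  have hY1 := H.hY1
  have hY2 := H.hY2
  set M2 := ∫ w, |w| ^ 2 ∂(gaussianReal 0 1) with hM2
  set Mn := ∫ w, |w| ^ (2 * k + 2) ∂(gaussianReal 0 1) with hMn
  have m2 : 0 ≤ M2 := integral_nonneg fun w => by positivity
  have mn : 0 ≤ Mn := integral_nonneg fun w => by positivity
  refine ⟨C * (1 + σ ^ 2 * M2 + σ ^ (2 * k + 2) * Mn), by positivity, ?_⟩
  intro e h he he1 hh hhe m _ hcf
  have hep : ∀ r : ℝ, 0 < e ^ r := fun r => Real.rpow_pos_of_pos he r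
  have hL : h * e ^ (-Y) ≤ 1 := by
    calc h * e ^ (-Y) ≤ e ^ 2 * e ^ (-Y) := by have := hep (-Y); gcongr
      _ = e ^ (2 - Y) := by
        rw [← Real.rpow_natCast e 2, ← Real.rpow_add he]; congr 1
      _ ≤ 1 := Real.rpow_le_one he.le he1 (by linarith)
  have hg := gauss_avg (n := 2 * k + 2) (by omega) (gauss_fubini hk he.le (σ * √h) m).1
    (hpt e h he he1 hh hL m hcf)
  rw [← hM2, ← hMn] at hg
  rw [show (Cp + Cm) / (2 * (k:ℝ) - Y) * h * e ^ (2 * (k:ℝ) - Y)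
    = h * ((Cp + Cm) / (2 * (k:ℝ) - Y)) * e ^ (2 * (k:ℝ) - Y) by ring]
  refine hg.trans ?_
  set A := h ^ 2 * e ^ (2 * (k:ℝ) - Y - 2) with hA
  set B := h * e ^ (2 * (k:ℝ) - Y / 2) with hB
  have hA0 : 0 ≤ A := by have := hep (2 * (k:ℝ) - Y - 2); positivity
  have hB0 : 0 ≤ B := by have := hep (2 * (k:ℝ) - Y / 2); positivity
  have hsq : (√h) ^ 2 = h := Real.sq_sqrt hh.le
  have hn : e ^ (2 * k) = e ^ (2 * (k:ℝ)) := by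
    rw [← Real.rpow_natCast]; push_cast; rfl
  have g1 : e ^ (2 * k) * ((h * e ^ (-Y)) ^ 2 + h * e ^ (1 - Y)) ≤ A + B := by
    have x1 : e ^ (2 * k) * (h * e ^ (-Y)) ^ 2 ≤ A := by
      have : e ^ (2 * k) * (h * e ^ (-Y)) ^ 2 = h ^ 2 * e ^ (2 * (k:ℝ) + -Y + -Y) := by
        rw [hn, Real.rpow_add he, Real.rpow_add he]; ring
      rw [this, hA]
      gcongr ?_ * ?_
      exact Real.rpow_le_rpow_of_exponent_ge he he1 (by linarith)
    have x2 : e ^ (2 * k) * (h * e ^ (1 - Y)) ≤ B := by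
      have : e ^ (2 * k) * (h * e ^ (1 - Y)) = h * e ^ (2 * (k:ℝ) + (1 - Y)) := by
        rw [hn, Real.rpow_add he]; ring
      rw [this, hB]
      gcongr ?_ * ?_
      exact Real.rpow_le_rpow_of_exponent_ge he he1 (by linarith)
    linarith
  have g2 : h * e ^ (2 * (k:ℝ) - Y - 2) * (σ * √h) ^ 2 * M2 = σ ^ 2 * M2 * A := by
    rw [mul_pow, hsq, hA]; ring
  have g3 : h * e ^ (-Y - 2) * |σ * √h| ^ (2 * k + 2) * Mn ≤ σ ^ (2 * k + 2) * Mn * A := by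
    rw [abs_of_nonneg (by positivity), mul_pow,
      show (√h) ^ (2 * k + 2) = h ^ (k + 1) by rw [← hsq, ← pow_mul, hsq]; congr 1]
    have : h ^ k ≤ e ^ (2 * k) := by rw [pow_mul]; gcongr
    have h3 : e ^ (2 * (k:ℝ) - Y - 2) = e ^ (2 * k) * e ^ (-Y - 2) := by
      rw [hn, ← Real.rpow_add he]; congr 1; ring
    have := hep (-Y - 2)
    calc h * e ^ (-Y - 2) * (σ ^ (2 * k + 2) * h ^ (k + 1)) * Mn
        = σ ^ (2 * k + 2) * Mn * (h ^ 2 * (h ^ k * e ^ (-Y - 2))) := by ring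
      _ ≤ σ ^ (2 * k + 2) * Mn * (h ^ 2 * (e ^ (2 * k) * e ^ (-Y - 2))) := by gcongr
      _ = _ := by rw [hA, h3]
  rw [g2, mul_assoc C]
  refine mul_le_mul_of_nonneg_left ?_ hC
  have : 0 ≤ σ ^ 2 * M2 * B := by positivity
  have : 0 ≤ σ ^ (2 * k + 2) * Mn * B := by positivity
  linarith

/-- Lemma C.5: `E(J_h^{2k} 1_{|σW_h + J_h| ≤ ε}) =
((C₊+C₋)/(2k−Y)) h ε^{2k−Y} + O(h² ε^{2k−Y−2}) + O(h ε^{2k−Y/2})`. -/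
theorem truncated_jump_even_moments
    {Ω : Type*} [MeasurableSpace Ω] (P : Measure Ω) [IsProbabilityMeasure P]
    (Y Cp Cm σ b : ℝ) (q : ℝ → ℝ)
    (hY1 : 1 < Y) (hY2 : Y < 2)
    (hCp : 0 < Cp) (hCm : 0 < Cm) (hσ : 0 < σ)
    (hq_meas : Measurable q) (hq_nonneg : ∀ x, 0 ≤ q x)
    (hq_bdd : ∃ M : ℝ, ∀ x, q x ≤ M)
    (hq_lim : Tendsto q (𝓝[≠] (0 : ℝ)) (𝓝 1))
    (hq_taylor : ∃ αp αm : ℝ, αp ≠ 0 ∧ αm ≠ 0 ∧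
      IntegrableOn (fun x => |q x - 1 - αp * x| * x ^ (-Y - 1)) (Set.Ioc (0 : ℝ) 1) ∧
      IntegrableOn (fun x => |q x - 1 - αm * x| * |x| ^ (-Y - 1)) (Set.Ico (-1 : ℝ) 0))
    (hq_log : ∃ K M : ℝ, ∀ x : ℝ, M ≤ |x| → |Real.log (q x)| ≤ K * |x|)
    (hq_inf : ∀ ε : ℝ, 0 < ε → ∃ c : ℝ, 0 < c ∧ ∀ x : ℝ, x ≠ 0 → |x| < ε → c ≤ q x)
    (hq_sq : IntegrableOn (fun x => q x ^ 2 * |x| ^ (-1 - Y)) {x : ℝ | 1 < |x|})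
    -- the jump part `J` and the Brownian part `W`
    (J : ℝ → Ω → ℝ) (W : Ω → ℝ)
    (hWmeas : Measurable W) (hW : P.map W = gaussianReal 0 1)
    (hJmeas : ∀ h : ℝ, Measurable (J h))
    (hJcf : ∀ h : ℝ, 0 < h → ∀ u : ℝ,
      ∫ ω, Complex.exp (Complex.I * u * J h ω) ∂P = Complex.exp (h * psiJ b Y Cp Cm q u))
    (hindep : ∀ h : ℝ, 0 < h → IndepFun W (J h) P)
    (k : ℕ) (hk : 1 ≤ k)
    -- the threshold `ε = ε(h)`
    (ε : ℝ → ℝ) (hεpos : ∀ h : ℝ, 0 < h → 0 < ε h)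
    (hε0 : Tendsto ε (𝓝[>] (0 : ℝ)) (𝓝 0))
    (hεsqrt : Tendsto (fun h => ε h / Real.sqrt h) (𝓝[>] (0 : ℝ)) atTop) :
    ∃ R₁ R₂ : ℝ → ℝ,
      (∀ h : ℝ, 0 < h →
        (∫ ω, (J h ω) ^ (2 * k) *
            Set.indicator {x : ℝ | |x| ≤ ε h} (fun _ => (1 : ℝ))
              (σ * Real.sqrt h * W ω + J h ω) ∂P)
          = (Cp + Cm) / (2 * k - Y) * h * ε h ^ (2 * (k : ℝ) - Y) + R₁ h + R₂ h) ∧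
      R₁ =O[𝓝[>] (0 : ℝ)] (fun h => h ^ 2 * ε h ^ (2 * (k : ℝ) - Y - 2)) ∧
      R₂ =O[𝓝[>] (0 : ℝ)] (fun h => h * ε h ^ (2 * (k : ℝ) - Y / 2)) := by
  obtain ⟨G, D0, K, H⟩ := LP.of_hyp hY1 hY2 hCp hCm hq_meas hq_nonneg hq_bdd hq_taylor
  obtain ⟨C, hC, hav⟩ := H.averaged b σ hσ hk
  set E : ℝ → ℝ := fun h => ∫ ω, (J h ω) ^ (2 * k) *
            Set.indicator {x : ℝ | |x| ≤ ε h} (fun _ => (1 : ℝ))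
              (σ * Real.sqrt h * W ω + J h ω) ∂P with hE
  set Err : ℝ → ℝ := fun h => E h - (Cp + Cm) / (2 * k - Y) * h * ε h ^ (2 * (k : ℝ) - Y) with hErr
  set A : ℝ → ℝ := fun h => h ^ 2 * ε h ^ (2 * (k : ℝ) - Y - 2) with hA
  set B : ℝ → ℝ := fun h => h * ε h ^ (2 * (k : ℝ) - Y / 2) with hB
  have hA0 : ∀ h, 0 < h → 0 < A h := fun h hh => by
    have := Real.rpow_pos_of_pos (hεpos h hh) (2 * (k : ℝ) - Y - 2)
    simp only [hA]; positivity
  have hB0 : ∀ h, 0 < h → 0 < B h := fun h hh => by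
    have := Real.rpow_pos_of_pos (hεpos h hh) (2 * (k : ℝ) - Y / 2)
    simp only [hB]; positivity
  have hbound : ∀ h, 0 < h → ε h ≤ 1 → h ≤ ε h ^ 2 → |Err h| ≤ C * (A h + B h) := by
    intro h hh he1 hhe
    have he := hεpos h hh
    haveI : IsProbabilityMeasure (P.map (J h)) :=
      Measure.isProbabilityMeasure_map (hJmeas h).aemeasurable
    have hcf : ∀ u, charFun (P.map (J h)) u
        = Complex.exp (h * psiG b (levyDensity Y Cp Cm q) u) := by
      intro u
      rw [charFun_apply_real, integral_map (hJmeas h).aemeasurable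
        (by fun_prop : Measurable fun x : ℝ => Complex.exp (u * x * Complex.I)).aestronglyMeasurable]
      refine Eq.trans ?_ (hJcf h hh u)
      congr 1; ext ω; congr 1; ring
    have hEq : E h = ∫ w, Phi k (ε h) (P.map (J h)) (σ * √h * w) ∂(gaussianReal 0 1) := by
      rw [← (gauss_fubini hk he.le (σ * √h) (P.map (J h))).2, ← hW,
        ← (indepFun_iff_map_prod_eq_prod_map_map hWmeas.aemeasurable
          (hJmeas h).aemeasurable).1 (hindep h hh)]
      rw [integral_map (hWmeas.prodMk (hJmeas h)).aemeasurable]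
      · rfl
      · have := measurable_ind (ε h)
        exact (by fun_prop : Measurable
          (fun z : ℝ × ℝ => z.2 ^ (2 * k) * ind (ε h) (σ * √h * z.1 + z.2))).aestronglyMeasurable
    have := hav (ε h) h he he1 hh hhe (P.map (J h)) hcf
    rw [← hEq] at this
    exact this
  have hev : ∀ᶠ h in 𝓝[>] (0:ℝ), 0 < h ∧ |Err h| ≤ C * (A h + B h) := by
    have e1 : ∀ᶠ h in 𝓝[>] (0:ℝ), ε h ≤ 1 := hε0.eventually_le_const one_pos
    have e2 : ∀ᶠ h in 𝓝[>] (0:ℝ), 1 ≤ ε h / √h := hεsqrt.eventually_ge_atTop 1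
    filter_upwards [e1, e2, self_mem_nhdsWithin] with h h1 h2 h3
    have h3' : 0 < h := h3
    refine ⟨h3', hbound h h3' h1 ?_⟩
    rw [le_div_iff₀ (Real.sqrt_pos.2 h3'), one_mul] at h2
    calc h = √h ^ 2 := (Real.sq_sqrt h3'.le).symm
      _ ≤ ε h ^ 2 := by gcongr
  refine ⟨fun h => Err h * (A h / (A h + B h)), fun h => Err h * (B h / (A h + B h)), ?_, ?_, ?_⟩
  · intro h hh
    have h1 := hA0 h hh
    have h2 := hB0 h hh
    have h3 : Err h * (A h / (A h + B h)) + Err h * (B h / (A h + B h)) = Err h := by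
      rw [← mul_add, ← add_div, div_self (by positivity), mul_one]
    rw [add_assoc, h3]
    simp only [hErr, hE]; ring
  · refine Asymptotics.IsBigO.of_bound C ?_
    filter_upwards [hev] with h hh
    have h1 := hA0 h hh.1
    have h2 := hB0 h hh.1
    change ‖Err h * (A h / (A h + B h))‖ ≤ C * ‖A h‖
    rw [Real.norm_eq_abs, Real.norm_eq_abs, abs_mul, abs_of_pos h1,
      abs_of_pos (by positivity : 0 < A h / (A h + B h))]
    calc _ ≤ C * (A h + B h) * (A h / (A h + B h)) := by gcongr; exact hh.2
      _ = _ := by field_simp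
  · refine Asymptotics.IsBigO.of_bound C ?_
    filter_upwards [hev] with h hh
    have h1 := hA0 h hh.1
    have h2 := hB0 h hh.1
    change ‖Err h * (B h / (A h + B h))‖ ≤ C * ‖B h‖
    rw [Real.norm_eq_abs, Real.norm_eq_abs, abs_mul, abs_of_pos h2,
      abs_of_pos (by positivity : 0 < B h / (A h + B h))]
    calc _ ≤ C * (A h + B h) * (B h / (A h + B h)) := by gcongr; exact hh.2
      _ = _ := by field_simp

end
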